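/- arXiv:2111.00949 — 2 statements merged into one kernel-verified Lean document; each statement's English description precedes it below -/
import Mathlib

section
/- Suppose n ≥ 1 and r = 2. Then sup_{z ≥ 0} |P(F_2 ≤ z) − P(Y_1 ≤ z)| ≤ 0.9496/√n, i.e. the Kolmogorov distance between the law of F_2 and the chi-square distribution with 1 degree of freedom is at most 0.9496/√n. -/
open MeasureTheory Finset Real

noncomputable section

instance instMSPerm (r : ℕ) : MeasurableSpace (Equiv.Perm (Fin r)) := ⊤

/-- The joint law of `n` independent uniformly random permutations of `{1, …, r}`:
the uniform probability measure on the finite product space. -/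
def friedmanMeasure (n r : ℕ) : Measure (Fin n → Equiv.Perm (Fin r)) :=
  (PMF.uniformOfFintype (Fin n → Equiv.Perm (Fin r))).toMeasure

/-- `ρ_i(j) = π_i(j) - (r+1)/2`, where `π_i(j) ∈ {1, …, r}` is the rank assigned by the
`i`-th permutation to treatment `j` (a permutation of `Fin r` assigns values in `{0, …, r-1}`,
hence the `+ 1`). -/
def rho (n r : ℕ) (i : Fin n) (j : Fin r) (ω : Fin n → Equiv.Perm (Fin r)) : ℝ :=
  ((ω i j : ℕ) : ℝ) + 1 - ((r : ℝ) + 1) / 2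

/-- `S_j = (√12/√(r(r+1)n)) ∑_{i=1}^n ρ_i(j)`. -/
def Sstat (n r : ℕ) (j : Fin r) (ω : Fin n → Equiv.Perm (Fin r)) : ℝ :=
  Real.sqrt 12 / Real.sqrt ((r : ℝ) * ((r : ℝ) + 1) * (n : ℝ)) * ∑ i, rho n r i j ω

/-- Friedman's statistic `F_r = ∑_{j=1}^r S_j²`. -/
def friedman (n r : ℕ) (ω : Fin n → Equiv.Perm (Fin r)) : ℝ :=
  ∑ j, (Sstat n r j ω) ^ 2

/-- The chi-square distribution with `p` degrees of freedom: the Gamma distribution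
with shape `p/2` and rate `1/2`. -/
def chiSq (p : ℕ) : Measure ℝ := ProbabilityTheory.gammaMeasure ((p : ℝ) / 2) (1 / 2)

end

/-!
For `r = 2` the two treatments have opposite centred ranks, so `F₂ = W² / n` for a simple random
walk `W` of length `n`, while `Y₁` is the square of a standard Gaussian `N`. As `W` has the parity
of `n`, the event `F₂ ≤ z` is `|W| < y` for some integer `y` of the opposite parity with
`|y - √(n z)| ≤ 1`. Fourier inversion gives, with `G` the distribution function of `|N|`,

  `P(|W| < y) = 2/π ∫_0^{π/2} sin(y t) cos(t)^n / sin(t) dt`,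
  `G(y / √n) = 2/π ∫_0^∞ sin(y t) exp(-n t² / 2) / t dt`,

and comparing the two kernels pointwise bounds the difference of the integrals by `O(1/n)`, which
is at most `0.1517 / √n` when `n ≥ 5`. Replacing `y / √n` by `√z` costs at most `√(2/π) / √n`, since
`√(2/π) < 0.7979` is the Lipschitz constant of `G`; the sum of the two constants is `0.9496`. For
`n ≤ 4` the law of `W` is explicit and crude bounds for `G` are enough.
-/

section TaylorBounds

theorem nonneg_of_hasDerivAt_nonneg {f f' : ℝ → ℝ} {a x : ℝ} (ha : 0 ≤ f a)
    (hf : ∀ y, HasDerivAt f (f' y) y) (hf' : ∀ y, a ≤ y → 0 ≤ f' y) (hax : a ≤ x) :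
    0 ≤ f x := by
  have hmono : MonotoneOn f (Set.Ici a) :=
    monotoneOn_of_hasDerivWithinAt_nonneg (convex_Ici a)
      (fun y _ => (hf y).continuousAt.continuousWithinAt)
      (fun y _ => (hf y).hasDerivWithinAt) fun y hy => hf' y (interior_subset hy)
  exact ha.trans (hmono Set.self_mem_Ici hax hax)

/-- The sum of the first `n` terms of the Taylor series of `x ↦ exp (-x)` at `0`. -/
noncomputable def expNegPartialSum (n : ℕ) (x : ℝ) : ℝ :=
  ∑ k ∈ range n, (-1) ^ k * x ^ k / (k.factorial : ℝ)

/-- The sum of the first `n` nonzero terms of the Taylor series of `cos` at `0`. -/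
noncomputable def cosPartialSum (n : ℕ) (x : ℝ) : ℝ :=
  ∑ k ∈ range n, (-1) ^ k * x ^ (2 * k) / ((2 * k).factorial : ℝ)

/-- The sum of the first `n` nonzero terms of the Taylor series of `sin` at `0`. -/
noncomputable def sinPartialSum (n : ℕ) (x : ℝ) : ℝ :=
  ∑ k ∈ range n, (-1) ^ k * x ^ (2 * k + 1) / ((2 * k + 1).factorial : ℝ)

theorem hasDerivAt_pow_succ_div_factorial (n : ℕ) (x : ℝ) :
    HasDerivAt (fun y : ℝ => y ^ (n + 1) / ((n + 1).factorial : ℝ))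
      (x ^ n / (n.factorial : ℝ)) x := by
  refine ((hasDerivAt_pow (n + 1) x).div_const _).congr_deriv ?_
  rw [Nat.factorial_succ]
  push_cast
  field_simp

theorem hasDerivAt_expNegPartialSum_succ (n : ℕ) (x : ℝ) :
    HasDerivAt (expNegPartialSum (n + 1)) (-expNegPartialSum n x) x := by
  have h := HasDerivAt.fun_sum (u := range n) fun k _ =>
    (hasDerivAt_pow_succ_div_factorial k x).const_mul ((-1 : ℝ) ^ (k + 1))
  refine ((h.add_const 1).congr_deriv ?_).congr_of_eventuallyEq (.of_forall fun y => ?_)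
  · simp only [expNegPartialSum, ← sum_neg_distrib]
    exact sum_congr rfl fun k _ => by ring
  · simp [expNegPartialSum, sum_range_succ', mul_div_assoc]

theorem hasDerivAt_sinPartialSum (n : ℕ) (x : ℝ) :
    HasDerivAt (sinPartialSum n) (cosPartialSum n x) x := by
  have h := HasDerivAt.fun_sum (u := range n) fun k _ =>
    (hasDerivAt_pow_succ_div_factorial (2 * k) x).const_mul ((-1 : ℝ) ^ k)
  simp only [← mul_div_assoc] at h
  exact h

theorem hasDerivAt_cosPartialSum_succ (n : ℕ) (x : ℝ) :
    HasDerivAt (cosPartialSum (n + 1)) (-sinPartialSum n x) x := by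
  have h := HasDerivAt.fun_sum (u := range n) fun k _ =>
    (hasDerivAt_pow_succ_div_factorial (2 * k + 1) x).const_mul ((-1 : ℝ) ^ (k + 1))
  refine ((h.add_const 1).congr_deriv ?_).congr_of_eventuallyEq (.of_forall fun y => ?_)
  · simp only [sinPartialSum, ← sum_neg_distrib]
    exact sum_congr rfl fun k _ => by ring
  · simp [cosPartialSum, sum_range_succ', mul_div_assoc, mul_add]

theorem neg_one_pow_mul_exp_neg_sub_expNegPartialSum_nonneg (n : ℕ) {x : ℝ} (hx : 0 ≤ x) :
    0 ≤ (-1) ^ n * (exp (-x) - expNegPartialSum n x) := by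
  induction n generalizing x with
  | zero => simpa [expNegPartialSum] using (exp_pos _).le
  | succ n ih =>
    refine nonneg_of_hasDerivAt_nonneg (a := 0)
      (f := fun y => (-1) ^ (n + 1) * (exp (-y) - expNegPartialSum (n + 1) y))
      (by simp [expNegPartialSum, sum_range_succ'])
      (fun y => ((((hasDerivAt_neg y).exp.sub
        (hasDerivAt_expNegPartialSum_succ n y)).const_mul _).congr_deriv ?_))
      (fun y hy => ih hy) hx
    ring

theorem neg_one_pow_mul_sin_sub_sinPartialSum_nonneg_of_cos {n : ℕ}
    (hcos : ∀ x, 0 ≤ x → 0 ≤ (-1) ^ n * (cos x - cosPartialSum n x)) {x : ℝ} (hx : 0 ≤ x) :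
    0 ≤ (-1) ^ n * (sin x - sinPartialSum n x) :=
  nonneg_of_hasDerivAt_nonneg (a := 0) (f := fun y => (-1) ^ n * (sin y - sinPartialSum n y))
    (by simp [sinPartialSum])
    (fun y => ((hasDerivAt_sin y).sub (hasDerivAt_sinPartialSum n y)).const_mul _) hcos hx

theorem neg_one_pow_mul_cos_sub_cosPartialSum_nonneg (n : ℕ) {x : ℝ} (hx : 0 ≤ x) :
    0 ≤ (-1) ^ (n + 1) * (cos x - cosPartialSum (n + 1) x) := by
  induction n generalizing x with
  | zero => simpa [cosPartialSum] using cos_le_one x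
  | succ n ih =>
    refine nonneg_of_hasDerivAt_nonneg (a := 0)
      (f := fun y => (-1) ^ (n + 2) * (cos y - cosPartialSum (n + 2) y))
      (by simp [cosPartialSum, sum_range_succ'])
      (fun y => ((((hasDerivAt_cos y).sub
        (hasDerivAt_cosPartialSum_succ (n + 1) y)).const_mul _).congr_deriv ?_))
      (fun y hy => neg_one_pow_mul_sin_sub_sinPartialSum_nonneg_of_cos (fun x hx => ih hx) hy) hx
    ring

end TaylorBounds

section KernelComparison

variable {t : ℝ}

theorem sq_le_of_le_pi_div_two (h0 : 0 ≤ t) (h : t ≤ π / 2) : t ^ 2 ≤ 2.468 := by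
  have := pi_lt_d6
  nlinarith

theorem cos_le_exp_neg_sq_div_two (h0 : 0 ≤ t) (h : t ≤ π / 2) : cos t ≤ exp (-(t ^ 2 / 2)) := by
  have hcos : cos t ≤ 1 - t ^ 2 / 2 + t ^ 4 / 24 := by
    have := neg_one_pow_mul_cos_sub_cosPartialSum_nonneg 2 h0
    norm_num [cosPartialSum, sum_range_succ, Nat.factorial] at this
    linarith
  have hexp : 1 - t ^ 2 / 2 + (t ^ 2 / 2) ^ 2 / 2 - (t ^ 2 / 2) ^ 3 / 6 ≤ exp (-(t ^ 2 / 2)) := by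
    have := neg_one_pow_mul_exp_neg_sub_expNegPartialSum_nonneg 4 (x := t ^ 2 / 2) (by positivity)
    norm_num [expNegPartialSum, sum_range_succ, Nat.factorial] at this
    linarith
  have hsq := sq_le_of_le_pi_div_two h0 h
  nlinarith [mul_nonneg (sq_nonneg (t ^ 2)) (by linarith : 0 ≤ 4 - t ^ 2)]

theorem exp_neg_sq_div_two_sub_cos_le (h0 : 0 ≤ t) (h : t ≤ π / 2) :
    exp (-(t ^ 2 / 2)) - cos t ≤ t ^ 4 / 12 := by
  have hcos : 1 - t ^ 2 / 2 + t ^ 4 / 24 - t ^ 6 / 720 ≤ cos t := by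
    have := neg_one_pow_mul_cos_sub_cosPartialSum_nonneg 3 h0
    norm_num [cosPartialSum, sum_range_succ, Nat.factorial] at this
    linarith
  have hexp : exp (-(t ^ 2 / 2)) ≤
      1 - t ^ 2 / 2 + (t ^ 2 / 2) ^ 2 / 2 - (t ^ 2 / 2) ^ 3 / 6 + (t ^ 2 / 2) ^ 4 / 24 := by
    have := neg_one_pow_mul_exp_neg_sub_expNegPartialSum_nonneg 5 (x := t ^ 2 / 2) (by positivity)
    norm_num [expNegPartialSum, sum_range_succ, Nat.factorial] at this
    linarith
  have hsq := sq_le_of_le_pi_div_two h0 h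
  nlinarith [mul_nonneg (pow_nonneg h0 6) (by linarith : 0 ≤ 2.468 - t ^ 2), pow_nonneg h0 6]

theorem inv_sin_sub_inv_le (h0 : 0 < t) (h : t ≤ π / 2) : (sin t)⁻¹ - t⁻¹ ≤ t / 4 := by
  have hs : 0 < sin t := sin_pos_of_pos_of_lt_pi h0 (by linarith [pi_pos])
  have hsin : t - t ^ 3 / 6 + t ^ 5 / 120 - t ^ 7 / 5040 ≤ sin t := by
    have := neg_one_pow_mul_sin_sub_sinPartialSum_nonneg_of_cos
      (fun x hx => neg_one_pow_mul_cos_sub_cosPartialSum_nonneg 3 hx) h0.le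
    norm_num [sinPartialSum, sum_range_succ, Nat.factorial] at this
    linarith
  have hpoly {u : ℝ} (hu0 : 0 ≤ u) (hu : u ≤ 2.468) :
      1 ≤ (1 - u / 6 + u ^ 2 / 120 - u ^ 3 / 5040) * (1 + u / 4) := by
    have : 0 ≤ u * (1 / 12 - u / 30 + 19 / 10080 * u ^ 2 - u ^ 3 / 20160) :=
      mul_nonneg hu0 <| by
        nlinarith [mul_nonneg (sq_nonneg u) (sub_nonneg.2 hu), sq_nonneg (2.468 - u)]
    linarith
  have hts : t ≤ sin t * (1 + t ^ 2 / 4) :=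
    calc t ≤ t * ((1 - t ^ 2 / 6 + (t ^ 2) ^ 2 / 120 - (t ^ 2) ^ 3 / 5040) * (1 + t ^ 2 / 4)) :=
          le_mul_of_one_le_right h0.le
            (hpoly (sq_nonneg t) (sq_le_of_le_pi_div_two h0.le h))
      _ = (t - t ^ 3 / 6 + t ^ 5 / 120 - t ^ 7 / 5040) * (1 + t ^ 2 / 4) := by ring
      _ ≤ sin t * (1 + t ^ 2 / 4) := by gcongr
  rw [inv_sub_inv hs.ne' h0.ne', div_le_iff₀ (by positivity)]
  linarith

theorem exp_neg_sq_div_two_pow (n : ℕ) (t : ℝ) :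
    exp (-(t ^ 2 / 2)) ^ n = exp (-(n * t ^ 2 / 2)) := by
  rw [← exp_nat_mul]
  ring_nf

theorem cos_pow_div_sin_sub_exp_div_le (n : ℕ) (h0 : 0 < t) (h : t ≤ π / 2) :
    cos t ^ n / sin t - exp (-(n * t ^ 2 / 2)) / t ≤ 1 / 4 * (t * exp (-(n * t ^ 2 / 2))) := by
  have hs : 0 < sin t := sin_pos_of_pos_of_lt_pi h0 (by linarith [pi_pos])
  have hc : 0 ≤ cos t := cos_nonneg_of_neg_pi_div_two_le_of_le (by linarith) h
  have hpow : cos t ^ n ≤ exp (-(n * t ^ 2 / 2)) := by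
    rw [← exp_neg_sq_div_two_pow]
    exact pow_le_pow_left₀ hc (cos_le_exp_neg_sq_div_two h0.le h) n
  calc cos t ^ n / sin t - exp (-(n * t ^ 2 / 2)) / t
      ≤ exp (-(n * t ^ 2 / 2)) / sin t - exp (-(n * t ^ 2 / 2)) / t := by gcongr
    _ = exp (-(n * t ^ 2 / 2)) * ((sin t)⁻¹ - t⁻¹) := by ring
    _ ≤ exp (-(n * t ^ 2 / 2)) * (t / 4) := by gcongr; exact inv_sin_sub_inv_le h0 h
    _ = 1 / 4 * (t * exp (-(n * t ^ 2 / 2))) := by ring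

theorem exp_div_sub_cos_pow_div_sin_le (n : ℕ) (h0 : 0 < t) (h : t ≤ π / 2) :
    exp (-((n + 1 : ℕ) * t ^ 2 / 2)) / t - cos t ^ (n + 1) / sin t ≤
      (n + 1) / 12 * (t ^ 3 * exp (-(n * t ^ 2 / 2))) := by
  have hs : 0 < sin t := sin_pos_of_pos_of_lt_pi h0 (by linarith [pi_pos])
  have hc : 0 ≤ cos t := cos_nonneg_of_neg_pi_div_two_le_of_le (by linarith) h
  simp only [← exp_neg_sq_div_two_pow]
  set e := exp (-(t ^ 2 / 2))
  have he : 0 < e := exp_pos _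
  have hce : cos t ≤ e := cos_le_exp_neg_sq_div_two h0.le h
  have hpow : e ^ (n + 1) - cos t ^ (n + 1) ≤ (e - cos t) * (n + 1) * e ^ n := by
    have := (le_abs_self _).trans (abs_pow_sub_pow_le e (cos t) (n + 1))
    rwa [abs_of_nonneg (sub_nonneg.2 hce), abs_of_pos he, abs_of_nonneg hc, max_eq_left hce,
      Nat.add_sub_cancel, Nat.cast_succ] at this
  calc e ^ (n + 1) / t - cos t ^ (n + 1) / sin t
      ≤ e ^ (n + 1) / t - cos t ^ (n + 1) / t := by gcongr; exact sin_le h0.le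
    _ = (e ^ (n + 1) - cos t ^ (n + 1)) / t := (sub_div _ _ _).symm
    _ ≤ (e - cos t) * (n + 1) * e ^ n / t := by gcongr
    _ ≤ t ^ 4 / 12 * (n + 1) * e ^ n / t := by
        gcongr; exact exp_neg_sq_div_two_sub_cos_le h0.le h
    _ = (n + 1) / 12 * (t ^ 3 * e ^ n) := by field_simp

theorem abs_cos_pow_div_sin_sub_exp_div_le (n : ℕ) (h0 : 0 < t) (h : t ≤ π / 2) :
    |cos t ^ (n + 1) / sin t - exp (-((n + 1 : ℕ) * t ^ 2 / 2)) / t| ≤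
      1 / 4 * (t * exp (-((n + 1 : ℕ) * t ^ 2 / 2))) +
        (n + 1) / 12 * (t ^ 3 * exp (-(n * t ^ 2 / 2))) := by
  have hupper := cos_pow_div_sin_sub_exp_div_le (n + 1) h0 h
  have hlower := exp_div_sub_cos_pow_div_sin_le n h0 h
  have hlinear : 0 ≤ 1 / 4 * (t * exp (-((n + 1 : ℕ) * t ^ 2 / 2))) := by positivity
  have hcubic : 0 ≤ (n + 1) / 12 * (t ^ 3 * exp (-(n * t ^ 2 / 2))) := by positivity
  rw [abs_sub_le_iff]
  constructor <;> linarith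

theorem exp_div_le_of_pi_div_two_le (n : ℕ) (h : π / 2 ≤ t) :
    exp (-((n + 1 : ℕ) * t ^ 2 / 2)) / t ≤
      (n + 1) / 12 * (t ^ 3 * exp (-(n * t ^ 2 / 2))) := by
  have ht : 1.57 ≤ t := by linarith [pi_gt_d2]
  have hsq : 2.46 ≤ t ^ 2 := by nlinarith
  have hexp : exp (-(t ^ 2 / 2)) ≤ (n + 1) / 12 * t ^ 4 :=
    calc exp (-(t ^ 2 / 2)) ≤ exp (-1) := exp_le_exp.2 (by linarith)
      _ ≤ 1 / 12 * t ^ 4 := by nlinarith [exp_neg_one_lt_d9]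
      _ ≤ (n + 1) / 12 * t ^ 4 := by gcongr; linarith [n.cast_nonneg (α := ℝ)]
  simp only [← exp_neg_sq_div_two_pow, pow_succ (exp _) n]
  calc exp (-(t ^ 2 / 2)) ^ n * exp (-(t ^ 2 / 2)) / t
      ≤ exp (-(t ^ 2 / 2)) ^ n * ((n + 1) / 12 * t ^ 4) / t := by gcongr
    _ = (n + 1) / 12 * (t ^ 3 * exp (-(t ^ 2 / 2)) ^ n) := by field_simp

end KernelComparison

section GaussianIntegrals

variable {b : ℝ}

theorem integrableOn_pow_odd_mul_exp_neg (hb : 0 < b) (k : ℕ) :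
    IntegrableOn (fun t => t ^ (2 * k + 1) * exp (-(b * t ^ 2 / 2))) (Set.Ioi 0) := by
  have h := integrableOn_rpow_mul_exp_neg_mul_sq (half_pos hb) (s := (2 * k + 1 : ℕ))
    (neg_one_lt_zero.trans_le (Nat.cast_nonneg _))
  simp only [rpow_natCast] at h
  exact h.congr_fun (fun t _ => by ring_nf) measurableSet_Ioi

theorem integral_pow_odd_mul_exp_neg (hb : 0 < b) (k : ℕ) :
    ∫ t in Set.Ioi (0 : ℝ), t ^ (2 * k + 1) * exp (-(b * t ^ 2 / 2)) =
      2 ^ k * k.factorial / b ^ (k + 1) := by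
  have h := integral_rpow_mul_exp_neg_mul_rpow (p := 2) (q := (2 * k + 1 : ℕ)) two_pos
    (neg_one_lt_zero.trans_le (Nat.cast_nonneg _)) (half_pos hb)
  have hexponent : (((2 * k + 1 : ℕ) : ℝ) + 1) / 2 = k + 1 := by push_cast; ring
  rw [neg_div, hexponent, Gamma_nat_eq_factorial, rpow_neg (half_pos hb).le] at h
  simp only [rpow_natCast, rpow_two] at h
  norm_cast at h
  simp only [show ∀ t : ℝ, -(b / 2) * t ^ 2 = -(b * t ^ 2 / 2) from fun t => by ring] at h
  rw [h, div_pow]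
  field_simp
  exact pow_succ' 2 k

theorem integral_cos_mul_exp_neg (hb : 0 < b) (x : ℝ) :
    ∫ t : ℝ, cos (x * t) * exp (-(b * t ^ 2 / 2)) = √(2 * π / b) * exp (-(x ^ 2 / b / 2)) := by
  have hre : 0 < ((b / 2 : ℝ) : ℂ).re := by simpa using hb
  have hintegrand (t : ℝ) : Complex.exp (Complex.I * x * t) *
      Complex.exp (-((b / 2 : ℝ) : ℂ) * t ^ 2) =
      Complex.exp ((x * t : ℝ) * Complex.I) * (exp (-(b * t ^ 2 / 2)) : ℝ) := by
    rw [Complex.ofReal_exp]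
    congr 2 <;> push_cast <;> ring
  have hsqrt : ((π : ℂ) / ((b / 2 : ℝ) : ℂ)) ^ (1 / 2 : ℂ) = (√(2 * π / b) : ℝ) := by
    rw [sqrt_eq_rpow, Complex.ofReal_cpow (by positivity)]
    congr 1
    · push_cast; field_simp
    · norm_num
  have hexp : Complex.exp (-(x : ℂ) ^ 2 / (4 * ((b / 2 : ℝ) : ℂ))) =
      (exp (-(x ^ 2 / b / 2)) : ℝ) := by
    rw [Complex.ofReal_exp]
    congr 1
    push_cast; field_simp; norm_num
  have hint := integrable_cexp_quadratic hre (Complex.I * x) 0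
  simp only [add_zero, add_comm (-((b / 2 : ℝ) : ℂ) * _), Complex.exp_add, hintegrand] at hint
  have h := fourierIntegral_gaussian hre (x : ℂ)
  simp only [hintegrand] at h
  rw [hsqrt, hexp, ← Complex.ofReal_mul] at h
  have hRe := congrArg Complex.re h
  rw [Complex.ofReal_re, ← RCLike.re_eq_complex_re, ← integral_re hint] at hRe
  simpa only [RCLike.re_eq_complex_re, Complex.re_mul_ofReal, Complex.exp_ofReal_mul_I_re]
    using hRe

theorem integral_Ioi_cos_mul_exp_neg (hb : 0 < b) (x : ℝ) :
    ∫ t in Set.Ioi (0 : ℝ), cos (x * t) * exp (-(b * t ^ 2 / 2)) =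
      √(2 * π / b) / 2 * exp (-(x ^ 2 / b / 2)) := by
  have heven := integral_comp_abs (f := fun t => cos (x * t) * exp (-(b * t ^ 2 / 2)))
  have hcos (t : ℝ) : cos (x * |t|) = cos (x * t) := by
    rcases abs_choice t with h | h <;> simp [h]
  simp only [sq_abs, hcos] at heven
  linarith [integral_cos_mul_exp_neg hb x]

theorem integrable_exp_neg_mul_sq_div_two (hb : 0 < b) :
    Integrable fun t : ℝ => exp (-(b * t ^ 2 / 2)) :=
  (integrable_exp_neg_mul_sq (half_pos hb)).congr (.of_forall fun t => by ring_nf)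

theorem integrable_sin_mul_exp_neg_div (hb : 0 < b) (y : ℝ) :
    Integrable fun t : ℝ => sin (y * t) * (exp (-(b * t ^ 2 / 2)) / t) := by
  refine ((integrable_exp_neg_mul_sq_div_two hb).const_mul |y|).mono'
    (by fun_prop) (.of_forall fun t => ?_)
  rcases eq_or_ne t 0 with rfl | ht
  · simp
  · calc ‖sin (y * t) * (exp (-(b * t ^ 2 / 2)) / t)‖
        = |sin (y * t)| * (exp (-(b * t ^ 2 / 2)) / |t|) := by simp
      _ ≤ |y * t| * (exp (-(b * t ^ 2 / 2)) / |t|) :=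
          mul_le_mul_of_nonneg_right abs_sin_le_abs (by positivity)
      _ = |y| * exp (-(b * t ^ 2 / 2)) := by rw [abs_mul]; field_simp

end GaussianIntegrals

/-- The distribution function of `|N|` for a standard Gaussian variable `N`, meaningful for
`x ≥ 0`; it is extended to an odd function of `x`. -/
noncomputable def absGaussianCDF (x : ℝ) : ℝ := √(2 / π) * ∫ u in (0 : ℝ)..x, exp (-(u ^ 2 / 2))

section AbsGaussianCDF

variable {x : ℝ}

theorem hasDerivAt_absGaussianCDF (x : ℝ) :
    HasDerivAt absGaussianCDF (√(2 / π) * exp (-(x ^ 2 / 2))) x := by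
  have hc : Continuous fun u : ℝ => exp (-(u ^ 2 / 2)) := by fun_prop
  exact (hc.integral_hasStrictDerivAt 0 x).hasDerivAt.const_mul _

theorem continuous_absGaussianCDF : Continuous absGaussianCDF :=
  continuous_iff_continuousAt.2 fun x => (hasDerivAt_absGaussianCDF x).continuousAt

@[simp]
theorem absGaussianCDF_zero : absGaussianCDF 0 = 0 := by simp [absGaussianCDF]

theorem monotone_absGaussianCDF : Monotone absGaussianCDF :=
  monotone_of_hasDerivAt_nonneg hasDerivAt_absGaussianCDF fun x => by positivity

theorem abs_absGaussianCDF_sub_le (x y : ℝ) :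
    |absGaussianCDF x - absGaussianCDF y| ≤ √(2 / π) * |x - y| := by
  have hderiv (z : ℝ) : ‖√(2 / π) * exp (-(z ^ 2 / 2))‖ ≤ √(2 / π) := by
    rw [norm_of_nonneg (by positivity)]
    exact mul_le_of_le_one_right (sqrt_nonneg _) (exp_le_one_iff.2 (by linarith [sq_nonneg z]))
  exact convex_univ.norm_image_sub_le_of_norm_hasDerivWithin_le
    (fun z _ => (hasDerivAt_absGaussianCDF z).hasDerivWithinAt) (fun z _ => hderiv z)
    (Set.mem_univ y) (Set.mem_univ x)

theorem absGaussianCDF_le (hx : 0 ≤ x) : absGaussianCDF x ≤ √(2 / π) * x := by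
  simpa [abs_of_nonneg hx] using (le_abs_self _).trans (abs_absGaussianCDF_sub_le x 0)

theorem cubic_le_absGaussianCDF (hx : 0 ≤ x) : √(2 / π) * (x - x ^ 3 / 6) ≤ absGaussianCDF x := by
  rw [← sub_nonneg]
  refine nonneg_of_hasDerivAt_nonneg
    (f := fun x => absGaussianCDF x - √(2 / π) * (x - x ^ 3 / 6))
    (f' := fun x => √(2 / π) * (exp (-(x ^ 2 / 2)) - (1 - x ^ 2 / 2))) (a := 0) (by simp)
    (fun x => ?_) (fun x _ => mul_nonneg (sqrt_nonneg _) (sub_nonneg.2 (one_sub_le_exp_neg _))) hx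
  have hpoly := ((hasDerivAt_id x).sub ((hasDerivAt_pow 3 x).div_const 6)).const_mul √(2 / π)
  refine ((hasDerivAt_absGaussianCDF x).sub hpoly).congr_deriv ?_
  push_cast
  ring

/-- Integrating the Fourier representation of the density of `√b N` over `[-y, y]`. -/
theorem absGaussianCDF_div_sqrt_eq_integral_sin {b y : ℝ} (hb : 0 < b) (hy : 0 ≤ y) :
    absGaussianCDF (y / √b) =
      2 / π * ∫ t in Set.Ioi (0 : ℝ), sin (y * t) * (exp (-(b * t ^ 2 / 2)) / t) := by
  have hint : Integrable (Function.uncurry fun x t : ℝ => cos (x * t) * exp (-(b * t ^ 2 / 2)))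
      ((volume.restrict (Set.Ioc 0 y)).prod (volume.restrict (Set.Ioi 0))) := by
    have hexp := (integrable_exp_neg_mul_sq_div_two hb).integrableOn (s := Set.Ioi 0)
    refine ((integrable_const (1 : ℝ)).mul_prod hexp).mono' (by fun_prop)
      (.of_forall fun p => ?_)
    simp only [Function.uncurry, norm_mul, norm_eq_abs, abs_exp]
    gcongr
    exact abs_cos_le_one _
  have hinner : ∀ t ∈ Set.Ioi (0 : ℝ), ∫ x in Set.Ioc 0 y, cos (x * t) * exp (-(b * t ^ 2 / 2)) =
      sin (y * t) * (exp (-(b * t ^ 2 / 2)) / t) := fun t ht => by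
    rw [integral_mul_const, ← intervalIntegral.integral_of_le hy,
      intervalIntegral.integral_comp_mul_right cos (ne_of_gt ht), integral_cos, zero_mul, sin_zero,
      sub_zero, smul_eq_mul]
    ring
  have hscale : ∫ x in (0 : ℝ)..y, exp (-(x ^ 2 / b / 2)) =
      √b * ∫ u in (0 : ℝ)..(y / √b), exp (-(u ^ 2 / 2)) := by
    have h := intervalIntegral.integral_comp_div (a := 0) (b := y) (fun u => exp (-(u ^ 2 / 2)))
      (sqrt_pos.2 hb).ne'
    simpa only [div_pow, sq_sqrt hb.le, zero_div, smul_eq_mul] using h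
  have hconst : 2 / π * (√(2 * π / b) / 2 * √b) = √(2 / π) := by
    have := sqrt_pos.2 hb
    have := sqrt_pos.2 pi_pos
    rw [sqrt_div (by positivity), sqrt_div (by positivity), sqrt_mul (by norm_num)]
    field_simp
    exact sq_sqrt pi_pos.le
  rw [← setIntegral_congr_fun measurableSet_Ioi hinner, ← integral_integral_swap hint]
  simp only [integral_Ioi_cos_mul_exp_neg hb]
  rw [integral_const_mul, ← intervalIntegral.integral_of_le hy, hscale, absGaussianCDF, ← hconst]
  ring

end AbsGaussianCDF

section ChiSquare

open ProbabilityTheory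

instance isProbabilityMeasure_chiSq (p : ℕ) [NeZero p] : IsProbabilityMeasure (chiSq p) :=
  isProbabilityMeasure_gammaMeasure (by have := NeZero.pos p; positivity) (by norm_num)

theorem hasDerivAt_absGaussianCDF_sqrt {x : ℝ} (hx : 0 < x) :
    HasDerivAt (fun x => absGaussianCDF √x) (gammaPDFReal (1 / 2) (1 / 2) x) x := by
  refine ((hasDerivAt_absGaussianCDF _).comp x (hasDerivAt_sqrt hx.ne')).congr_deriv ?_
  have h2 : √2 ^ 2 = (2 : ℝ) := sq_sqrt (by norm_num)
  have := sqrt_pos.2 hx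
  have := sqrt_pos.2 pi_pos
  rw [gammaPDFReal, if_pos hx.le, Gamma_one_half_eq, sq_sqrt hx.le, ← sqrt_eq_rpow,
    show (1 / 2 - 1 : ℝ) = -(1 / 2) by norm_num, rpow_neg hx.le, ← sqrt_eq_rpow,
    sqrt_div (by norm_num), sqrt_div (by norm_num), sqrt_one, one_div_mul_eq_div]
  field_simp
  rw [h2]

theorem chiSq_one_real_Iic {z : ℝ} (hz : 0 ≤ z) :
    (chiSq 1).real (Set.Iic z) = absGaussianCDF √z := by
  have hpdf : (chiSq 1).real (Set.Iic z) = ∫ x in Set.Iic z, gammaPDFReal (1 / 2) (1 / 2) x := by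
    rw [← cdf_eq_real, chiSq, Nat.cast_one,
      cdf_gammaMeasure_eq_integral (by norm_num) (by norm_num)]
  have hsupport : ∫ x in Set.Iic z, gammaPDFReal (1 / 2) (1 / 2) x =
      ∫ x in Set.Icc 0 z, gammaPDFReal (1 / 2) (1 / 2) x :=
    setIntegral_eq_of_subset_of_forall_sdiff_eq_zero measurableSet_Iic Set.Icc_subset_Iic_self
      fun x hx => if_neg fun h0 => hx.2 ⟨h0, hx.1⟩
  have hcont : ContinuousOn (fun x => absGaussianCDF √x) (Set.Icc 0 z) :=
    (continuous_absGaussianCDF.comp continuous_sqrt).continuousOn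
  have hderiv : ∀ x ∈ Set.Ioo 0 z, HasDerivAt (fun x => absGaussianCDF √x)
      (gammaPDFReal (1 / 2) (1 / 2) x) x := fun x hx => hasDerivAt_absGaussianCDF_sqrt hx.1
  have hint : IntervalIntegrable (gammaPDFReal (1 / 2) (1 / 2)) volume 0 z :=
    intervalIntegral.intervalIntegrable_deriv_of_nonneg (by rwa [Set.uIcc_of_le hz])
      (by simpa [hz] using hderiv)
      fun x _ => gammaPDFReal_nonneg (by norm_num) (by norm_num) x
  rw [hpdf, hsupport, integral_Icc_eq_integral_Ioc, ← intervalIntegral.integral_of_le hz,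
    intervalIntegral.integral_eq_sub_of_hasDerivAt_of_le hz hcont hderiv hint]
  simp

end ChiSquare

section DirichletIntegrals

theorem integrableOn_sin_mul_div_sin (m : ℤ) :
    IntegrableOn (fun t => sin (m * t) / sin t) (Set.Ioc 0 (π / 2)) := by
  have hcont : Continuous fun t => (Polynomial.Chebyshev.U ℝ (m - 1)).eval (cos t) :=
    (Polynomial.continuous _).comp continuous_cos
  refine hcont.integrableOn_Ioc.congr_fun (fun t ht => ?_) measurableSet_Ioc
  have hs : sin t ≠ 0 := (sin_pos_of_pos_of_lt_pi ht.1 (by linarith [ht.2, pi_pos])).ne'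
  rw [eq_div_iff hs, Polynomial.Chebyshev.U_real_cos]
  push_cast
  ring_nf

theorem integral_sin_two_mul_add_one_mul_div_sin (k : ℕ) :
    ∫ t in Set.Ioc 0 (π / 2), sin ((2 * k + 1 : ℤ) * t) / sin t = π / 2 := by
  have hs : ∀ t ∈ Set.Ioc 0 (π / 2), sin t ≠ 0 := fun t ht =>
    (sin_pos_of_pos_of_lt_pi ht.1 (by linarith [ht.2, pi_pos])).ne'
  induction k with
  | zero =>
    have hone : Set.EqOn (fun t => sin ((2 * (0 : ℕ) + 1 : ℤ) * t) / sin t) (fun _ => 1)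
        (Set.Ioc 0 (π / 2)) := fun t ht => by simp [hs t ht]
    rw [setIntegral_congr_fun measurableSet_Ioc hone, setIntegral_const, smul_eq_mul, mul_one,
      volume_real_Ioc_of_le (by positivity), sub_zero]
  | succ k ih =>
    have hstep : Set.EqOn (fun t => sin ((2 * (k + 1 : ℕ) + 1 : ℤ) * t) / sin t)
        (fun t => sin ((2 * k + 1 : ℤ) * t) / sin t + 2 * cos ((2 * (k + 1 : ℕ) : ℝ) * t))
        (Set.Ioc 0 (π / 2)) := fun t ht => by
      have hadd : ((2 * (k + 1 : ℕ) + 1 : ℤ) : ℝ) * t = 2 * (k + 1 : ℕ) * t + t := by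
        push_cast; ring
      have hsub : ((2 * k + 1 : ℤ) : ℝ) * t = 2 * (k + 1 : ℕ) * t - t := by push_cast; ring
      simp only [hadd, hsub, sin_add, sin_sub]
      field_simp [hs t ht]
      ring
    have hcos : IntegrableOn (fun t => 2 * cos ((2 * (k + 1 : ℕ) : ℝ) * t)) (Set.Ioc 0 (π / 2)) :=
      Continuous.integrableOn_Ioc (by fun_prop)
    have hzero : ∫ t in Set.Ioc 0 (π / 2), 2 * cos ((2 * (k + 1 : ℕ) : ℝ) * t) = 0 := by
      rw [integral_const_mul, ← intervalIntegral.integral_of_le (by positivity),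
        intervalIntegral.integral_comp_mul_left cos (by positivity), integral_cos,
        show 2 * (k + 1 : ℕ) * (π / 2) = (k + 1 : ℕ) * π by ring, sin_nat_mul_pi]
      simp
    rw [setIntegral_congr_fun measurableSet_Ioc hstep,
      integral_add (integrableOn_sin_mul_div_sin _) hcos, ih, hzero, add_zero]

theorem integral_sin_odd_mul_div_sin {m : ℤ} (hm : Odd m) :
    ∫ t in Set.Ioc 0 (π / 2), sin (m * t) / sin t = m.sign * (π / 2) := by
  have hpos {l : ℤ} (hl : Odd l) (h0 : 0 < l) :
      ∫ t in Set.Ioc 0 (π / 2), sin (l * t) / sin t = π / 2 := by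
    obtain ⟨k, rfl⟩ := hl
    lift k to ℕ using by omega
    exact integral_sin_two_mul_add_one_mul_div_sin k
  rcases lt_trichotomy m 0 with h | rfl | h
  · have hflip : ∫ t in Set.Ioc 0 (π / 2), sin (m * t) / sin t =
        -∫ t in Set.Ioc 0 (π / 2), sin ((-m : ℤ) * t) / sin t := by
      rw [← integral_neg]
      simp [neg_div]
    rw [hflip, hpos hm.neg (neg_pos.2 h), Int.sign_eq_neg_one_of_neg h, Int.cast_neg, Int.cast_one,
      neg_one_mul]
  · simp
  · rw [Int.sign_eq_one_of_pos h, hpos hm h, Int.cast_one, one_mul]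

theorem cos_mul_sin_mul_div_sin (w y : ℤ) (t : ℝ) :
    cos (w * t) * (sin (y * t) / sin t) =
      1 / 2 * (sin ((y + w : ℤ) * t) / sin t + sin ((y - w : ℤ) * t) / sin t) := by
  push_cast
  rw [add_mul, sub_mul, sin_add, sin_sub]
  ring

theorem integrableOn_cos_mul_sin_mul_div_sin (w y : ℤ) :
    IntegrableOn (fun t => cos (w * t) * (sin (y * t) / sin t)) (Set.Ioc 0 (π / 2)) := by
  simp only [cos_mul_sin_mul_div_sin]
  exact ((integrableOn_sin_mul_div_sin _).add (integrableOn_sin_mul_div_sin _)).const_mul _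

theorem integral_cos_mul_sin_mul_div_sin {w y : ℤ} (hy : 0 ≤ y) (hwy : Odd (w + y)) :
    ∫ t in Set.Ioc 0 (π / 2), cos (w * t) * (sin (y * t) / sin t) =
      if |w| < y then π / 2 else 0 := by
  obtain ⟨k, hk⟩ := hwy
  have hadd : Odd (y + w) := ⟨k, by omega⟩
  have hsub : Odd (y - w) := ⟨k - w, by omega⟩
  simp only [cos_mul_sin_mul_div_sin]
  rw [integral_const_mul, integral_add (integrableOn_sin_mul_div_sin _)
    (integrableOn_sin_mul_div_sin _), integral_sin_odd_mul_div_sin hadd,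
    integral_sin_odd_mul_div_sin hsub]
  rcases lt_or_ge |w| y with h | h
  · rw [if_pos h, Int.sign_eq_one_of_pos (by grind), Int.sign_eq_one_of_pos (by grind)]
    push_cast
    ring
  · rw [if_neg h.not_gt]
    rcases le_abs'.1 h with hw | hw
    · rw [Int.sign_eq_neg_one_of_neg (by omega), Int.sign_eq_one_of_pos (by omega)]
      norm_num
    · rw [Int.sign_eq_one_of_pos (by omega), Int.sign_eq_neg_one_of_neg (by omega)]
      norm_num

end DirichletIntegrals

theorem abs_setIntegral_sub_setIntegral_le {α : Type*} [MeasurableSpace α] {μ : Measure α}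
    {s t : Set α} {f g M : α → ℝ} (hs : MeasurableSet s) (ht : MeasurableSet t) (hst : s ⊆ t)
    (hf : IntegrableOn f s μ) (hg : IntegrableOn g t μ) (hM : IntegrableOn M t μ)
    (hfg : ∀ x ∈ s, |f x - g x| ≤ M x) (hgM : ∀ x ∈ t \ s, |g x| ≤ M x) :
    |(∫ x in s, f x ∂μ) - ∫ x in t, g x ∂μ| ≤ ∫ x in t, M x ∂μ := by
  have hf' : IntegrableOn (s.indicator f) t μ := (hf.integrable_indicator hs).integrableOn
  have heq : ∫ x in s, f x ∂μ = ∫ x in t, s.indicator f x ∂μ := by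
    rw [setIntegral_indicator hs, Set.inter_eq_right.2 hst]
  rw [heq, ← integral_sub hf' hg, ← norm_eq_abs]
  refine norm_integral_le_of_norm_le hM ((ae_restrict_iff' ht).2 (.of_forall fun x hx => ?_))
  by_cases hxs : x ∈ s
  · simpa [hxs] using hfg x hxs
  · simpa [hxs] using hgM x ⟨hx, hxs⟩

theorem abs_integral_cos_pow_div_sin_sub_le {n : ℕ} (hn : 1 ≤ n) {y : ℝ}
    (hint : IntegrableOn (fun t => sin (y * t) * (cos t ^ (n + 1) / sin t)) (Set.Ioc 0 (π / 2))) :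
    |(∫ t in Set.Ioc 0 (π / 2), sin (y * t) * (cos t ^ (n + 1) / sin t)) -
        ∫ t in Set.Ioi (0 : ℝ), sin (y * t) * (exp (-((n + 1 : ℕ) * t ^ 2 / 2)) / t)| ≤
      1 / (4 * (n + 1)) + (n + 1) / (6 * n ^ 2) := by
  have hn0 : (0 : ℝ) < n := mod_cast hn
  have hn1 : (0 : ℝ) < (n + 1 : ℕ) := by positivity
  have hlin : IntegrableOn (fun t : ℝ => 1 / 4 * (t * exp (-((n + 1 : ℕ) * t ^ 2 / 2))))
      (Set.Ioi 0) := by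
    simpa [IntegrableOn] using (integrableOn_pow_odd_mul_exp_neg hn1 0).const_mul (1 / 4)
  have hcub : IntegrableOn (fun t : ℝ => (n + 1) / 12 * (t ^ 3 * exp (-(n * t ^ 2 / 2))))
      (Set.Ioi 0) := by
    simpa [IntegrableOn] using (integrableOn_pow_odd_mul_exp_neg hn0 1).const_mul ((n + 1 : ℝ) / 12)
  have hlinValue : ∫ t in Set.Ioi (0 : ℝ), t * exp (-((n + 1 : ℕ) * t ^ 2 / 2)) = 1 / (n + 1) := by
    simpa using integral_pow_odd_mul_exp_neg hn1 0
  have hcubValue : ∫ t in Set.Ioi (0 : ℝ), t ^ 3 * exp (-(n * t ^ 2 / 2)) = 2 / n ^ 2 := by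
    simpa using integral_pow_odd_mul_exp_neg hn0 1
  have hdom {u a M : ℝ} (h : |a| ≤ M) : |sin u * a| ≤ M := by
    rw [abs_mul]
    exact (mul_le_of_le_one_left (abs_nonneg _) (abs_sin_le_one _)).trans h
  refine (abs_setIntegral_sub_setIntegral_le measurableSet_Ioc measurableSet_Ioi
    Set.Ioc_subset_Ioi_self hint (integrable_sin_mul_exp_neg_div hn1 y).integrableOn
    (hlin.add hcub) (fun t ht => ?_) fun t ht => ?_).trans_eq ?_
  · rw [← mul_sub]
    exact hdom (abs_cos_pow_div_sin_sub_exp_div_le n ht.1 ht.2)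
  · have ht0 : 0 < t := ht.1
    have ht2 : π / 2 ≤ t := (not_le.1 fun h => ht.2 ⟨ht0, h⟩).le
    refine hdom ((abs_of_pos (by positivity)).trans_le ?_)
    exact (exp_div_le_of_pi_div_two_le n ht2).trans (le_add_of_nonneg_left (by positivity))
  · rw [integral_add' hlin hcub, integral_const_mul, integral_const_mul, hlinValue, hcubValue]
    field_simp
    ring

section UniformPermutations

variable {n r : ℕ}

instance (r : ℕ) : MeasurableSingletonClass (Equiv.Perm (Fin r)) := ⟨fun _ => trivial⟩

instance isProbabilityMeasure_friedmanMeasure (n r : ℕ) :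
    IsProbabilityMeasure (friedmanMeasure n r) :=
  PMF.toMeasure.isProbabilityMeasure _

theorem friedmanMeasure_real_setOf (p : (Fin n → Equiv.Perm (Fin r)) → Prop) [DecidablePred p] :
    (friedmanMeasure n r).real {ω | p ω} = (#{ω | p ω} : ℝ) / r.factorial ^ n := by
  rw [measureReal_def, friedmanMeasure,
    PMF.toMeasure_uniformOfFintype_apply _ (Set.toFinite _).measurableSet]
  simp [Fintype.card_subtype, Fintype.card_perm]

/-- The walk whose steps are the signs of the permutations. For `r = 2` the signs are the doubled
centred ranks of the second treatment, so this is a simple random walk. -/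
def signWalk (ω : Fin n → Equiv.Perm (Fin r)) : ℤ := ∑ i, (Equiv.Perm.sign (ω i) : ℤ)

theorem odd_signWalk_add (ω : Fin n → Equiv.Perm (Fin r)) {y : ℤ} (hy : Odd (n + y)) :
    Odd (signWalk ω + y) := by
  have hparity : Even (signWalk ω + n) := by
    have hsum : signWalk ω + n = ∑ i, ((Equiv.Perm.sign (ω i) : ℤ) + 1) := by
      simp [signWalk, sum_add_distrib]
    rw [hsum]
    refine even_sum _ fun i _ => ?_
    rcases Int.units_eq_one_or (Equiv.Perm.sign (ω i)) with h | h <;> simp [h]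
  grind

theorem abs_signWalk_le (ω : Fin n → Equiv.Perm (Fin r)) : |signWalk ω| ≤ n := by
  refine (abs_sum_le_sum_abs _ _).trans_eq ?_
  simp

theorem friedmanMeasure_real_abs_signWalk_lt_of_lt {y : ℤ} (hy : n < y) :
    (friedmanMeasure n r).real {ω | |signWalk ω| < y} = 1 := by
  have huniv : {ω : Fin n → Equiv.Perm (Fin r) | |signWalk ω| < y} = Set.univ :=
    Set.eq_univ_of_forall fun ω => (abs_signWalk_le ω).trans_lt hy
  rw [huniv, probReal_univ]

theorem friedmanMeasure_real_abs_signWalk_lt_zero :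
    (friedmanMeasure n r).real {ω | |signWalk ω| < 0} = 0 := by
  simp [(abs_nonneg _).not_gt]

theorem sum_cos_signWalk (n : ℕ) (t : ℝ) :
    ∑ ω : Fin n → Equiv.Perm (Fin 2), cos (signWalk ω * t) = 2 ^ n * cos t ^ n := by
  have hstep : ∑ σ : Equiv.Perm (Fin 2),
      Complex.exp (((Equiv.Perm.sign σ : ℤ) * t : ℝ) * Complex.I) = (2 * cos t : ℝ) := by
    rw [show (univ : Finset (Equiv.Perm (Fin 2))) = {1, Equiv.swap 0 1} by decide,
      sum_pair (by decide)]
    simp [Complex.two_cos]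
  have hpow := Fintype.sum_pow
    (fun σ : Equiv.Perm (Fin 2) => Complex.exp (((Equiv.Perm.sign σ : ℤ) * t : ℝ) * Complex.I)) n
  simp only [hstep, ← Complex.exp_sum, ← sum_mul, ← Complex.ofReal_sum] at hpow
  have hre := congrArg Complex.re hpow
  rw [← Complex.ofReal_pow, Complex.ofReal_re, mul_pow, Complex.re_sum] at hre
  simpa only [Complex.exp_ofReal_mul_I_re, signWalk, Int.cast_sum, sum_mul] using hre.symm

theorem sin_mul_cos_pow_div_sin_eq_sum (n : ℕ) (y t : ℝ) :
    sin (y * t) * (cos t ^ n / sin t) = 1 / 2 ^ n *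
      ∑ ω : Fin n → Equiv.Perm (Fin 2), cos (signWalk ω * t) * (sin (y * t) / sin t) := by
  rw [← sum_mul, sum_cos_signWalk]
  field_simp

theorem integrableOn_sin_mul_cos_pow_div_sin (n : ℕ) (y : ℤ) :
    IntegrableOn (fun t => sin (y * t) * (cos t ^ n / sin t)) (Set.Ioc 0 (π / 2)) := by
  simp only [sin_mul_cos_pow_div_sin_eq_sum]
  exact (integrable_finsetSum _ fun ω _ => integrableOn_cos_mul_sin_mul_div_sin _ y).const_mul _

theorem friedmanMeasure_real_abs_signWalk_lt {y : ℤ} (hy : 0 ≤ y) (hny : Odd (n + y)) :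
    (friedmanMeasure n 2).real {ω | |signWalk ω| < y} =
      2 / π * ∫ t in Set.Ioc 0 (π / 2), sin (y * t) * (cos t ^ n / sin t) := by
  simp only [sin_mul_cos_pow_div_sin_eq_sum]
  rw [integral_const_mul,
    integral_finsetSum _ fun ω _ => integrableOn_cos_mul_sin_mul_div_sin _ y]
  simp only [fun ω => integral_cos_mul_sin_mul_div_sin hy (odd_signWalk_add ω hny)]
  rw [← sum_filter, sum_const, nsmul_eq_mul, friedmanMeasure_real_setOf, Nat.factorial_two]
  push_cast
  field_simp

end UniformPermutations

section FriedmanTwo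

variable {n : ℕ} {z : ℝ}

theorem friedman_two_eq (ω : Fin n → Equiv.Perm (Fin 2)) :
    friedman n 2 ω = (signWalk ω : ℝ) ^ 2 / n := by
  have hrank : ∀ σ : Equiv.Perm (Fin 2), 2 * (σ 0 : ℤ) = 1 - Equiv.Perm.sign σ ∧
      2 * (σ 1 : ℤ) = 1 + Equiv.Perm.sign σ := by decide
  have hfst (i : Fin n) : rho n 2 i 0 ω = -((Equiv.Perm.sign (ω i) : ℤ) / 2 : ℝ) := by
    have : 2 * ((ω i 0 : ℕ) : ℝ) = 1 - (Equiv.Perm.sign (ω i) : ℤ) := mod_cast (hrank (ω i)).1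
    rw [rho]
    push_cast
    linarith
  have hsnd (i : Fin n) : rho n 2 i 1 ω = (Equiv.Perm.sign (ω i) : ℤ) / 2 := by
    have : 2 * ((ω i 1 : ℕ) : ℝ) = 1 + (Equiv.Perm.sign (ω i) : ℤ) := mod_cast (hrank (ω i)).2
    rw [rho]
    push_cast
    linarith
  simp only [friedman, Fin.sum_univ_two, Sstat, hfst, hsnd, sum_neg_distrib, ← sum_div,
    ← Int.cast_sum, mul_pow, div_pow, neg_sq, sq_sqrt (show (0 : ℝ) ≤ 12 by norm_num)]
  rw [sq_sqrt (by positivity), signWalk]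
  push_cast
  rcases eq_or_ne (n : ℝ) 0 with h | h
  · simp [h]
  · field_simp
    ring

theorem exists_nonneg_odd_add_mem_Ioc (m : ℤ) {x : ℝ} (hx : 0 ≤ x) :
    ∃ y : ℤ, 0 ≤ y ∧ Odd (m + y) ∧ (y : ℝ) ∈ Set.Ioc (x - 1) (x + 1) := by
  have hle := Int.floor_le x
  have hlt := Int.lt_floor_add_one x
  have hfloor : 0 ≤ ⌊x⌋ := Int.floor_nonneg.2 hx
  rcases Int.even_or_odd (m + ⌊x⌋) with h | h
  · refine ⟨⌊x⌋ + 1, by omega, by rw [← add_assoc]; exact h.add_one, ?_, ?_⟩ <;>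
      push_cast <;> linarith
  · exact ⟨⌊x⌋, hfloor, h, by linarith, by linarith⟩

/-- As `signWalk ω + y` is odd, `|signWalk ω|` is never `y`, and it is less than `y` already if it
is less than `y + 1`. -/
theorem friedman_two_le_iff (hn : 1 ≤ n) (hz : 0 ≤ z) {y : ℤ} (hny : Odd (n + y))
    (hy : (y : ℝ) ∈ Set.Ioc (√(n * z) - 1) (√(n * z) + 1)) (ω : Fin n → Equiv.Perm (Fin 2)) :
    friedman n 2 ω ≤ z ↔ |signWalk ω| < y := by
  have hn0 : (0 : ℝ) < n := mod_cast hn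
  obtain ⟨k, hk⟩ := odd_signWalk_add ω hny
  have hsqrt : friedman n 2 ω ≤ z ↔ (|signWalk ω| : ℤ) ≤ √(n * z) := by
    rw [friedman_two_eq, div_le_iff₀ hn0, mul_comm z, ← sq_sqrt (by positivity : 0 ≤ n * z),
      sq_le_sq, abs_of_nonneg (sqrt_nonneg _), sq_sqrt (by positivity), Int.cast_abs]
  rw [hsqrt]
  constructor
  · intro h
    have hlt : |signWalk ω| < y + 1 := by exact_mod_cast h.trans_lt (sub_lt_iff_lt_add.1 hy.1)
    grind
  · intro h
    have hle : ((|signWalk ω| : ℤ) : ℝ) + 1 ≤ y := mod_cast h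
    linarith [hy.2]

theorem exists_friedmanMeasure_real_friedman_two_le_eq (hn : 1 ≤ n) (hz : 0 ≤ z) :
    ∃ y : ℤ, 0 ≤ y ∧ Odd (n + y) ∧ |y - √n * √z| ≤ 1 ∧
      (friedmanMeasure n 2).real {ω | friedman n 2 ω ≤ z} =
        (friedmanMeasure n 2).real {ω | |signWalk ω| < y} := by
  obtain ⟨y, hy0, hny, hy⟩ := exists_nonneg_odd_add_mem_Ioc n (sqrt_nonneg (n * z))
  refine ⟨y, hy0, hny, ?_, ?_⟩
  · rw [← sqrt_mul n.cast_nonneg, abs_le]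
    constructor <;> linarith [hy.1, hy.2]
  · simp only [friedman_two_le_iff hn hz hny hy]

end FriedmanTwo

section KolmogorovBounds

variable {n : ℕ} {z : ℝ} {y : ℤ}

theorem sqrt_two_div_pi_lt : √(2 / π) < 0.7979 := by
  rw [sqrt_lt' (by norm_num), div_lt_iff₀ pi_pos]
  linarith [pi_gt_d6]

theorem lt_sqrt_two_div_pi : 0.79 < √(2 / π) := by
  rw [lt_sqrt (by norm_num), lt_div_iff₀ pi_pos]
  linarith [pi_lt_d6]

theorem abs_friedmanMeasure_real_sub_absGaussianCDF_le (hn : 1 ≤ n) (hy : 0 ≤ y)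
    (hny : Odd ((n + 1 : ℕ) + y)) :
    |(friedmanMeasure (n + 1) 2).real {ω | |signWalk ω| < y} - absGaussianCDF (y / √(n + 1 : ℕ))| ≤
      2 / π * (1 / (4 * (n + 1)) + (n + 1) / (6 * n ^ 2)) := by
  rw [friedmanMeasure_real_abs_signWalk_lt hy hny,
    absGaussianCDF_div_sqrt_eq_integral_sin (by positivity) (mod_cast hy), ← mul_sub, abs_mul,
    abs_of_pos (by positivity)]
  gcongr
  exact abs_integral_cos_pow_div_sin_sub_le hn (integrableOn_sin_mul_cos_pow_div_sin (n + 1) y)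

theorem inversion_error_le (hn : 4 ≤ n) :
    2 / π * (1 / (4 * (n + 1)) + (n + 1) / (6 * n ^ 2)) ≤ 0.1517 / √(n + 1 : ℕ) := by
  have hn4 : (4 : ℝ) ≤ n := mod_cast hn
  have hpi : 2 / π ≤ 0.6367 := by
    rw [div_le_iff₀ pi_pos]
    linarith [pi_gt_d6]
  have hcub : (n + 1) / (6 * (n : ℝ) ^ 2) ≤ 25 / 96 / (n + 1) := by
    rw [div_le_div_iff₀ (by positivity) (by positivity)]
    nlinarith
  have hsqrt : 2.2 ≤ √(n + 1 : ℕ) := le_sqrt_of_sq_le (by push_cast; linarith)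
  have hsq : √(n + 1 : ℕ) ^ 2 = n + 1 := by rw [sq_sqrt (by positivity)]; push_cast; rfl
  calc 2 / π * (1 / (4 * (n + 1)) + (n + 1) / (6 * n ^ 2))
      ≤ 0.6367 * (1 / (4 * (n + 1)) + 25 / 96 / (n + 1)) := by gcongr
    _ = 0.6367 * (49 / 96) / √(n + 1 : ℕ) ^ 2 := by rw [hsq]; field_simp; norm_num
    _ ≤ 0.1517 / √(n + 1 : ℕ) := by
      rw [div_le_div_iff₀ (by positivity) (by positivity)]
      nlinarith

theorem abs_absGaussianCDF_div_sqrt_sub_le (hn : 1 ≤ n) (hy : |y - √n * √z| ≤ 1) :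
    |absGaussianCDF (y / √n) - absGaussianCDF √z| ≤ 0.7979 / √n := by
  have hn0 : 0 < √(n : ℝ) := sqrt_pos.2 (mod_cast hn)
  calc |absGaussianCDF (y / √n) - absGaussianCDF √z|
      ≤ √(2 / π) * |y / √n - √z| := abs_absGaussianCDF_sub_le _ _
    _ = √(2 / π) * |y - √n * √z| / √n := by
      rw [mul_div_assoc, ← abs_of_pos hn0, ← abs_div, abs_of_pos hn0]
      congr 2
      field_simp
    _ ≤ 0.7979 * 1 / √n := by gcongr; exact sqrt_two_div_pi_lt.le
    _ = 0.7979 / √n := by rw [mul_one]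

theorem abs_friedmanMeasure_real_sub_le_of_five_le (hn : 5 ≤ n) (hy0 : 0 ≤ y) (hny : Odd (n + y))
    (hy : |y - √n * √z| ≤ 1) :
    |(friedmanMeasure n 2).real {ω | |signWalk ω| < y} - absGaussianCDF √z| ≤ 0.9496 / √n := by
  obtain ⟨m, rfl⟩ : ∃ m, n = m + 1 := ⟨n - 1, by omega⟩
  calc |(friedmanMeasure (m + 1) 2).real {ω | |signWalk ω| < y} - absGaussianCDF √z|
      ≤ |(friedmanMeasure (m + 1) 2).real {ω | |signWalk ω| < y} -
            absGaussianCDF (y / √(m + 1 : ℕ))| +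
          |absGaussianCDF (y / √(m + 1 : ℕ)) - absGaussianCDF √z| := abs_sub_le _ _ _
    _ ≤ 0.1517 / √(m + 1 : ℕ) + 0.7979 / √(m + 1 : ℕ) :=
      add_le_add ((abs_friedmanMeasure_real_sub_absGaussianCDF_le (by omega) hy0 hny).trans
        (inversion_error_le (by omega))) (abs_absGaussianCDF_div_sqrt_sub_le (by omega) hy)
    _ = 0.9496 / √(m + 1 : ℕ) := by rw [← add_div]; norm_num

theorem absGaussianCDF_sqrt_le_one (hz : 0 ≤ z) : absGaussianCDF √z ≤ 1 :=
  (chiSq_one_real_Iic hz).symm.trans_le measureReal_le_one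

theorem le_absGaussianCDF_of_le_one {a x : ℝ} (ha0 : 0 ≤ a) (ha1 : a ≤ 1) (hax : a ≤ x) :
    0.79 * (a - a ^ 3 / 6) ≤ absGaussianCDF x := by
  have hcubic : 0 ≤ a - a ^ 3 / 6 := by
    have := pow_le_of_le_one ha0 ha1 three_ne_zero
    linarith
  calc 0.79 * (a - a ^ 3 / 6) ≤ √(2 / π) * (a - a ^ 3 / 6) :=
        mul_le_mul_of_nonneg_right lt_sqrt_two_div_pi.le hcubic
    _ ≤ absGaussianCDF a := cubic_le_absGaussianCDF ha0
    _ ≤ absGaussianCDF x := monotone_absGaussianCDF hax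

theorem abs_friedmanMeasure_real_sub_le_of_eq_zero (hn : 1 ≤ n)
    (hy : |((0 : ℤ) : ℝ) - √n * √z| ≤ 1) :
    |(friedmanMeasure n 2).real {ω | |signWalk ω| < 0} - absGaussianCDF √z| ≤ 0.9496 / √n := by
  have h := abs_absGaussianCDF_div_sqrt_sub_le hn hy
  rw [Int.cast_zero, zero_div, absGaussianCDF_zero] at h
  rw [friedmanMeasure_real_abs_signWalk_lt_zero]
  exact h.trans (by gcongr; norm_num)

theorem abs_friedmanMeasure_real_sub_le_of_lt (hn : 1 ≤ n) (hn4 : n ≤ 4) (hz : 0 ≤ z)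
    (hny : n < y) (hy : |y - √n * √z| ≤ 1) :
    |(friedmanMeasure n 2).real {ω | |signWalk ω| < y} - absGaussianCDF √z| ≤ 0.9496 / √n := by
  have hsqrt1 : 1 ≤ √(n : ℝ) := one_le_sqrt.2 (mod_cast hn)
  have hsqrt2 : √(n : ℝ) ≤ 2 := sqrt_le_iff.2 ⟨by norm_num, by norm_num; exact_mod_cast hn4⟩
  have hsq : √(n : ℝ) * √n = n := mul_self_sqrt n.cast_nonneg
  have hny' : (n : ℝ) + 1 ≤ y := mod_cast hny
  have hz1 : 1 ≤ √z := by nlinarith [(abs_le.1 hy).2]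
  have hlower := le_absGaussianCDF_of_le_one zero_le_one le_rfl hz1
  have hupper := absGaussianCDF_sqrt_le_one hz
  rw [friedmanMeasure_real_abs_signWalk_lt_of_lt hny]
  calc |1 - absGaussianCDF √z| ≤ 0.9496 / 2 := by rw [abs_le]; constructor <;> linarith
    _ ≤ 0.9496 / √n := by gcongr

theorem abs_friedmanMeasure_two_real_lt_one_sub_le (hz : 0 ≤ z) :
    |(friedmanMeasure 2 2).real {ω | |signWalk ω| < 1} - absGaussianCDF √z| ≤
      0.9496 / √(2 : ℕ) := by
  have hprob : (friedmanMeasure 2 2).real {ω | |signWalk ω| < 1} = 1 / 2 := by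
    have hcard : #{ω : Fin 2 → Equiv.Perm (Fin 2) | |signWalk ω| < 1} = 2 := by decide +kernel
    rw [friedmanMeasure_real_setOf, hcard]
    norm_num
  have hlower := absGaussianCDF_zero.symm.trans_le (monotone_absGaussianCDF (sqrt_nonneg z))
  have hupper := absGaussianCDF_sqrt_le_one hz
  have hsqrt : √(2 : ℕ) ≤ 1.5 := sqrt_le_iff.2 (by norm_num)
  calc |(friedmanMeasure 2 2).real {ω | |signWalk ω| < 1} - absGaussianCDF √z|
      ≤ 0.9496 / 1.5 := by rw [hprob, abs_le]; constructor <;> linarith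
    _ ≤ 0.9496 / √(2 : ℕ) := by gcongr

theorem abs_friedmanMeasure_three_real_lt_two_sub_le (hz : 0 ≤ z) (hhalf : 1 / 2 ≤ √z) :
    |(friedmanMeasure 3 2).real {ω | |signWalk ω| < 2} - absGaussianCDF √z| ≤
      0.9496 / √(3 : ℕ) := by
  have hprob : (friedmanMeasure 3 2).real {ω | |signWalk ω| < 2} = 3 / 4 := by
    have hcard : #{ω : Fin 3 → Equiv.Perm (Fin 2) | |signWalk ω| < 2} = 6 := by decide +kernel
    rw [friedmanMeasure_real_setOf, hcard]
    norm_num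
  have hlower := le_absGaussianCDF_of_le_one (by norm_num) (by norm_num) hhalf
  have hupper := absGaussianCDF_sqrt_le_one hz
  have hsqrt : √(3 : ℕ) ≤ 1.8 := sqrt_le_iff.2 (by norm_num)
  calc |(friedmanMeasure 3 2).real {ω | |signWalk ω| < 2} - absGaussianCDF √z|
      ≤ 0.9496 / 1.8 := by rw [hprob, abs_le]; constructor <;> linarith
    _ ≤ 0.9496 / √(3 : ℕ) := by gcongr

theorem abs_friedmanMeasure_four_real_lt_one_sub_le (hone : √z ≤ 1) :
    |(friedmanMeasure 4 2).real {ω | |signWalk ω| < 1} - absGaussianCDF √z| ≤ 0.9496 / 2 := by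
  have hprob : (friedmanMeasure 4 2).real {ω | |signWalk ω| < 1} = 3 / 8 := by
    have hcard : #{ω : Fin 4 → Equiv.Perm (Fin 2) | |signWalk ω| < 1} = 6 := by decide +kernel
    rw [friedmanMeasure_real_setOf, hcard]
    norm_num
  have hlower := absGaussianCDF_zero.symm.trans_le (monotone_absGaussianCDF (sqrt_nonneg z))
  have hupper : absGaussianCDF √z ≤ 0.7979 * 1 := (absGaussianCDF_le (sqrt_nonneg z)).trans
    (by gcongr; exact sqrt_two_div_pi_lt.le)
  rw [hprob, abs_le]
  constructor <;> linarith

theorem abs_friedmanMeasure_four_real_lt_three_sub_le (hz : 0 ≤ z) (hone : 1 ≤ √z) :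
    |(friedmanMeasure 4 2).real {ω | |signWalk ω| < 3} - absGaussianCDF √z| ≤ 0.9496 / 2 := by
  have hprob : (friedmanMeasure 4 2).real {ω | |signWalk ω| < 3} = 7 / 8 := by
    have hcard : #{ω : Fin 4 → Equiv.Perm (Fin 2) | |signWalk ω| < 3} = 14 := by decide +kernel
    rw [friedmanMeasure_real_setOf, hcard]
    norm_num
  have hlower := le_absGaussianCDF_of_le_one zero_le_one le_rfl hone
  have hupper := absGaussianCDF_sqrt_le_one hz
  rw [hprob, abs_le]
  constructor <;> linarith

theorem abs_friedmanMeasure_real_sub_le_of_pos_of_le (hn : n ≤ 4) (hz : 0 ≤ z) (hy0 : 0 < y)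
    (hyn : y ≤ n) (hny : Odd (n + y)) (hy : |y - √n * √z| ≤ 1) :
    |(friedmanMeasure n 2).real {ω | |signWalk ω| < y} - absGaussianCDF √z| ≤ 0.9496 / √n := by
  obtain ⟨k, hk⟩ := hny
  obtain ⟨hlower, hupper⟩ := abs_le.1 hy
  interval_cases n
  · omega
  · omega
  · obtain rfl : y = 1 := by omega
    exact abs_friedmanMeasure_two_real_lt_one_sub_le hz
  · obtain rfl : y = 2 := by omega
    have hsqrt : √(3 : ℕ) ≤ 2 := sqrt_le_iff.2 (by norm_num)
    have hhalf : 1 / 2 ≤ √z := by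
      have := mul_le_mul_of_nonneg_right hsqrt (sqrt_nonneg z)
      push_cast at hupper this
      linarith
    exact abs_friedmanMeasure_three_real_lt_two_sub_le hz hhalf
  · have hsqrt : √(4 : ℕ) = 2 := by
      rw [show ((4 : ℕ) : ℝ) = 2 ^ 2 by norm_num, sqrt_sq zero_le_two]
    rw [hsqrt] at hlower hupper ⊢
    obtain rfl | rfl : y = 1 ∨ y = 3 := by omega
    · push_cast at hlower
      exact abs_friedmanMeasure_four_real_lt_one_sub_le (by linarith)
    · push_cast at hupper
      exact abs_friedmanMeasure_four_real_lt_three_sub_le hz (by linarith)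

end KolmogorovBounds

/-- **Corollary 1.3, case `r = 2` (Gaunt–Reinert).** For `n ≥ 1`, the Kolmogorov distance
between the law of `F_2` and the chi-square distribution with 1 degree of freedom is at most
`0.9496/√n`: for all `z ≥ 0`, `|P(F_2 ≤ z) − P(Y_1 ≤ z)| ≤ 0.9496/√n`. -/
theorem friedman_two_kolmogorov_bound (n : ℕ) (hn : 1 ≤ n) (z : ℝ) (hz : 0 ≤ z) :
    |((friedmanMeasure n 2) {ω | friedman n 2 ω ≤ z}).toReal
        - ((chiSq 1) (Set.Iic z)).toReal|
      ≤ 0.9496 / Real.sqrt n := by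
  obtain ⟨y, hy0, hny, hy, hP⟩ := exists_friedmanMeasure_real_friedman_two_le_eq hn hz
  rw [← measureReal_def, ← measureReal_def, hP, chiSq_one_real_Iic hz]
  rcases le_or_gt 5 n with hn5 | hn5
  · exact abs_friedmanMeasure_real_sub_le_of_five_le hn5 hy0 hny hy
  have hn4 : n ≤ 4 := by omega
  rcases hy0.eq_or_lt with rfl | hy0
  · exact abs_friedmanMeasure_real_sub_le_of_eq_zero hn hy
  rcases lt_or_ge (n : ℤ) y with hlt | hle
  · exact abs_friedmanMeasure_real_sub_le_of_lt hn hn4 hz hlt hy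
  · exact abs_friedmanMeasure_real_sub_le_of_pos_of_le hn4 hz hy0 hle hny hy
end

section
/- Suppose n ≥ 1 and r = 3. Then sup_{z ≥ 0} |P(F_3 ≤ z) − P(Y_2 ≤ z)| ≤ 29/n^{1/4} + 67/n^{1/2} + 62/n^{3/4} + 8/n^{5/4} + 38/n^{3/2}. -/
open MeasureTheory Finset Real

/-!
In orthonormal coordinates of the plane of vectors with coordinate sum zero, Friedman's statistic
for three treatments is the squared norm of a normalised sum of `n` independent bounded planar
vectors, symmetric and with identity covariance; the chi-square law with two degrees of freedom is
that of the squared norm of a standard planar Gaussian. So two laws on the plane have to be compared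
on balls centred at the origin.

Following Esseen, add to both laws an independent Gaussian of small variance `v`. By Fourier
inversion the smoothed densities differ by at most the integral of the difference of the
characteristic functions against `exp (-v‖ξ‖²/2)`. For `‖ξ‖² ≲ n` a Taylor expansion bounds the
difference by `O(1/n) * exp (-‖ξ‖²/16)`, and for larger `ξ` the weight is exponentially small in
`v * n`. Undoing the smoothing costs the Gaussian mass of an annulus of width `δ`, plus the
probability that the smoothing variable has norm at least `δ`. With `v` of order `n ^ (-3/4)` and
`δ` of order `n ^ (-1/4)` every error is `O(n ^ (-1/4))` as long as the squared radius is at most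
`n ^ (1/4)`; larger balls follow by monotonicity and the Gaussian tail.
-/

open ProbabilityTheory Module Metric Complex
open scoped RealInnerProductSpace Pointwise ENNReal

section IsotropicGaussian

variable {V : Type*} [NormedAddCommGroup V] [InnerProductSpace ℝ V]

/-- The density of the centred Gaussian law on `V` with covariance `v` times the identity. -/
noncomputable def isotropicGaussianPDFReal (v : ℝ) (x : V) : ℝ :=
  (2 * π * v) ^ (-(finrank ℝ V / 2 : ℝ)) * Real.exp (-(2 * v)⁻¹ * ‖x‖ ^ 2)

lemma isotropicGaussianPDFReal_nonneg {v : ℝ} (hv : 0 ≤ v) (x : V) :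
    0 ≤ isotropicGaussianPDFReal v x := by
  unfold isotropicGaussianPDFReal
  positivity

@[fun_prop]
lemma continuous_isotropicGaussianPDFReal (v : ℝ) :
    Continuous (isotropicGaussianPDFReal v : V → ℝ) := by
  unfold isotropicGaussianPDFReal
  fun_prop

variable [FiniteDimensional ℝ V] [MeasurableSpace V] [BorelSpace V]

lemma integrable_exp_neg_mul_sq_norm {b : ℝ} (hb : 0 < b) :
    Integrable fun x : V ↦ Real.exp (-b * ‖x‖ ^ 2) := by
  have h := (GaussianFourier.integrable_cexp_neg_mul_sq_norm_add (b := (b : ℂ)) (by simpa)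
    0 (0 : V)).re
  refine h.congr (ae_of_all _ fun x ↦ ?_)
  simp [← Complex.ofReal_pow, ← Complex.ofReal_mul, ← Complex.ofReal_neg, Complex.exp_ofReal_re]

lemma integrable_isotropicGaussianPDFReal {v : ℝ} (hv : 0 < v) :
    Integrable (isotropicGaussianPDFReal v : V → ℝ) :=
  (integrable_exp_neg_mul_sq_norm (by positivity)).const_mul _

lemma integral_isotropicGaussianPDFReal {v : ℝ} (hv : 0 < v) :
    ∫ x : V, isotropicGaussianPDFReal v x = 1 := by
  have hbase : π / (2 * v)⁻¹ = 2 * π * v := by field_simp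
  simp_rw [isotropicGaussianPDFReal, integral_const_mul]
  rw [GaussianFourier.integral_rexp_neg_mul_sq_norm (by positivity), hbase,
    ← Real.rpow_add (by positivity), neg_add_cancel, Real.rpow_zero]

variable (V) in
/-- The centred Gaussian law on `V` with covariance `v` times the identity, given by its density so
that Fourier inversion applies pointwise. -/
noncomputable def isotropicGaussian (v : ℝ) : Measure V :=
  volume.withDensity fun x ↦ ENNReal.ofReal (isotropicGaussianPDFReal v x)

lemma isProbabilityMeasure_isotropicGaussian {v : ℝ} (hv : 0 < v) :
    IsProbabilityMeasure (isotropicGaussian V v) := by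
  refine ⟨?_⟩
  rw [isotropicGaussian, withDensity_apply _ .univ, Measure.restrict_univ,
    ← ofReal_integral_eq_lintegral_ofReal (integrable_isotropicGaussianPDFReal hv)
    (ae_of_all _ (isotropicGaussianPDFReal_nonneg hv.le)), integral_isotropicGaussianPDFReal hv,
    ENNReal.ofReal_one]

lemma integral_isotropicGaussian {E : Type*} [NormedAddCommGroup E] [NormedSpace ℝ E] {v : ℝ}
    (hv : 0 ≤ v) (f : V → E) :
    ∫ x, f x ∂isotropicGaussian V v = ∫ x, isotropicGaussianPDFReal v x • f x := by
  rw [isotropicGaussian, integral_withDensity_eq_integral_toReal_smul (by fun_prop) (by simp)]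
  simp [ENNReal.toReal_ofReal (isotropicGaussianPDFReal_nonneg hv _)]

lemma isotropicGaussian_real {v : ℝ} (hv : 0 < v) {A : Set V} (hA : MeasurableSet A) :
    (isotropicGaussian V v).real A = ∫ x in A, isotropicGaussianPDFReal v x := by
  rw [isotropicGaussian, Measure.real, withDensity_apply _ hA, integral_eq_lintegral_of_nonneg_ae
    (ae_of_all _ (isotropicGaussianPDFReal_nonneg hv.le)) (by fun_prop)]

lemma charFun_isotropicGaussian {v : ℝ} (hv : 0 < v) (ξ : V) :
    charFun (isotropicGaussian V v) ξ = (Real.exp (-(v / 2) * ‖ξ‖ ^ 2) : ℂ) := by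
  have hint : ∀ x : V, isotropicGaussianPDFReal v x • cexp (⟪x, ξ⟫ * I)
      = ((2 * π * v) ^ (-(finrank ℝ V / 2 : ℝ)) : ℝ)
        * cexp (-((2 * v)⁻¹ : ℝ) * ‖x‖ ^ 2 + I * ⟪ξ, x⟫) := by
    intro x
    rw [isotropicGaussianPDFReal, Complex.real_smul, Complex.exp_add, real_inner_comm, mul_comm I]
    push_cast
    ring
  have hv' : (v : ℂ) ≠ 0 := by exact_mod_cast hv.ne'
  have hre : 0 < (((2 * v)⁻¹ : ℝ) : ℂ).re := by
    rw [Complex.ofReal_re]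
    positivity
  have hbase : (π / ((2 * v)⁻¹ : ℝ) : ℂ) = (2 * π * v : ℝ) := by
    push_cast
    field_simp
  have hcoef : ((2 * π * v : ℝ) : ℂ) ^ (finrank ℝ V / 2 : ℂ)
      = ((2 * π * v) ^ (finrank ℝ V / 2 : ℝ) : ℝ) := by
    rw [Complex.ofReal_cpow (by positivity)]
    push_cast
    rfl
  rw [charFun_apply, integral_isotropicGaussian hv.le]
  simp_rw [hint]
  rw [integral_const_mul, GaussianFourier.integral_cexp_neg_mul_sq_norm_add hre,
    hbase, hcoef, ← mul_assoc, ← Complex.ofReal_mul, ← Real.rpow_add (by positivity),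
    neg_add_cancel, Real.rpow_zero, Complex.ofReal_one, one_mul, I_sq]
  push_cast
  congr 1
  field_simp
  norm_num

/-- Up to scaling, the Gaussian density is its own characteristic function. -/
lemma ofReal_isotropicGaussianPDFReal {v : ℝ} (hv : 0 < v) (x : V) :
    (isotropicGaussianPDFReal v x : ℂ) = ((2 * π) ^ finrank ℝ V : ℝ)⁻¹
      * ∫ ξ : V, Real.exp (-(v / 2) * ‖ξ‖ ^ 2) * cexp (-⟪x, ξ⟫ * I) := by
  have hscale : (2 * π * v) ^ (-(finrank ℝ V / 2 : ℝ)) * (2 * π * v⁻¹) ^ (-(finrank ℝ V / 2 : ℝ))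
      = ((2 * π) ^ finrank ℝ V)⁻¹ := by
    rw [← Real.mul_rpow (by positivity) (by positivity),
      show 2 * π * v * (2 * π * v⁻¹) = (2 * π) ^ (2 : ℝ) by rw [Real.rpow_two]; field_simp,
      ← Real.rpow_mul (by positivity), ← Real.rpow_natCast, ← Real.rpow_neg (by positivity)]
    congr 1
    ring
  have h := charFun_isotropicGaussian (inv_pos.2 hv) (-x)
  rw [norm_neg, charFun_apply, integral_isotropicGaussian (inv_pos.2 hv).le] at h
  rw [isotropicGaussianPDFReal, show -(2 * v)⁻¹ = -(v⁻¹ / 2) by ring, Complex.ofReal_mul, ← h,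
    ← integral_const_mul, ← integral_const_mul, ← hscale]
  refine integral_congr_ae (ae_of_all _ fun ξ ↦ ?_)
  simp only [isotropicGaussianPDFReal, inner_neg_right, real_inner_comm, Complex.real_smul]
  push_cast
  rw [mul_inv, inv_inv]
  ring_nf

end IsotropicGaussian

section Smoothing

section Group

variable {G : Type*} [AddGroup G] [MeasurableSpace G] [MeasurableAdd₂ G] {μ γ : Measure G}
  [IsProbabilityMeasure μ] [IsProbabilityMeasure γ] {A A' B : Set G}

lemma measureReal_le_conv_add_compl (hA' : MeasurableSet A') (h : A + B ⊆ A') :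
    μ.real A ≤ (μ ∗ γ).real A' + γ.real Bᶜ := by
  have hsub : A ×ˢ Set.univ ⊆ (fun p : G × G ↦ p.1 + p.2) ⁻¹' A' ∪ Set.univ ×ˢ Bᶜ := by
    rintro ⟨x, y⟩ ⟨hx, -⟩
    by_cases hy : y ∈ B
    · exact .inl (h (Set.add_mem_add hx hy))
    · exact .inr ⟨trivial, hy⟩
  calc μ.real A = (μ.prod γ).real (A ×ˢ Set.univ) := by simp
    _ ≤ (μ.prod γ).real ((fun p : G × G ↦ p.1 + p.2) ⁻¹' A' ∪ Set.univ ×ˢ Bᶜ) :=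
        measureReal_mono hsub
    _ ≤ (μ.prod γ).real ((fun p : G × G ↦ p.1 + p.2) ⁻¹' A')
          + (μ.prod γ).real (Set.univ ×ˢ Bᶜ) := measureReal_union_le _ _
    _ = (μ ∗ γ).real A' + γ.real Bᶜ := by
        rw [Measure.conv, map_measureReal_apply (by fun_prop) hA']
        simp

lemma conv_measureReal_le_add_compl (hA : MeasurableSet A) (h : A - B ⊆ A') :
    (μ ∗ γ).real A ≤ μ.real A' + γ.real Bᶜ := by
  have hsub : (fun p : G × G ↦ p.1 + p.2) ⁻¹' A ⊆ A' ×ˢ Set.univ ∪ Set.univ ×ˢ Bᶜ := by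
    rintro ⟨x, y⟩ hxy
    by_cases hy : y ∈ B
    · exact .inl ⟨h ⟨x + y, hxy, y, hy, add_sub_cancel_right x y⟩, trivial⟩
    · exact .inr ⟨trivial, hy⟩
  calc (μ ∗ γ).real A = (μ.prod γ).real ((fun p : G × G ↦ p.1 + p.2) ⁻¹' A) := by
        rw [Measure.conv, map_measureReal_apply (by fun_prop) hA]
    _ ≤ (μ.prod γ).real (A' ×ˢ Set.univ ∪ Set.univ ×ˢ Bᶜ) := measureReal_mono hsub
    _ ≤ (μ.prod γ).real (A' ×ˢ Set.univ) + (μ.prod γ).real (Set.univ ×ˢ Bᶜ) :=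
        measureReal_union_le _ _
    _ = μ.real A' + γ.real Bᶜ := by simp

lemma conv_measureReal_apply (hA : MeasurableSet A) :
    (μ ∗ γ).real A = ∫ x, γ.real ((x + ·) ⁻¹' A) ∂μ := by
  have h := integral_conv ((integrable_const (1 : ℝ) (μ := μ ∗ γ)).indicator hA)
  rw [integral_indicator_const _ hA, smul_eq_mul, mul_one] at h
  rw [h]
  refine integral_congr_ae (ae_of_all _ fun x ↦ ?_)
  simp only [← integral_indicator_one (hA.preimage (measurable_const_add x))]
  rfl

end Group

variable {V : Type*} [NormedAddCommGroup V] [InnerProductSpace ℝ V] [FiniteDimensional ℝ V]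
  [MeasurableSpace V] [BorelSpace V]

/-- The density of `μ ∗ isotropicGaussian V v`. -/
noncomputable def gaussianSmoothing (μ : Measure V) (v : ℝ) (x : V) : ℝ :=
  ∫ w, isotropicGaussianPDFReal v (x - w) ∂μ

lemma integrable_isotropicGaussianPDFReal_sub {v : ℝ} (hv : 0 < v) (μ : Measure V)
    [IsProbabilityMeasure μ] :
    Integrable (fun p : V × V ↦ isotropicGaussianPDFReal v (p.1 - p.2)) (volume.prod μ) := by
  rw [integrable_prod_iff' (by fun_prop)]
  refine ⟨ae_of_all _ fun w ↦ (integrable_isotropicGaussianPDFReal hv).comp_sub_right w, ?_⟩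
  simp_rw [Real.norm_of_nonneg (isotropicGaussianPDFReal_nonneg hv.le _),
    integral_sub_right_eq_self (μ := volume) (isotropicGaussianPDFReal v),
    integral_isotropicGaussianPDFReal hv]
  exact integrable_const 1

lemma integrable_gaussianSmoothing {v : ℝ} (hv : 0 < v) (μ : Measure V) [IsProbabilityMeasure μ] :
    Integrable (gaussianSmoothing μ v) :=
  (integrable_isotropicGaussianPDFReal_sub hv μ).integral_prod_left

lemma conv_isotropicGaussian_real {v : ℝ} (hv : 0 < v) (μ : Measure V) [IsProbabilityMeasure μ]
    {A : Set V} (hA : MeasurableSet A) :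
    (μ ∗ isotropicGaussian V v).real A = ∫ x in A, gaussianSmoothing μ v x := by
  have := isProbabilityMeasure_isotropicGaussian (V := V) hv
  have hint := (integrable_isotropicGaussianPDFReal_sub hv μ).mono_measure
    (Measure.prod_mono (Measure.restrict_le_self (s := A)) le_rfl)
  have hslice : ∀ w, (isotropicGaussian V v).real ((w + ·) ⁻¹' A)
      = ∫ x in A, isotropicGaussianPDFReal v (x - w) := by
    intro w
    rw [isotropicGaussian_real hv (hA.preimage (by fun_prop)),
      ← (measurePreserving_add_left volume w).setIntegral_preimage_emb
        (measurableEmbedding_addLeft w) (fun x ↦ isotropicGaussianPDFReal v (x - w)) A]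
    simp only [add_sub_cancel_left]
  simp_rw [conv_measureReal_apply hA, hslice, gaussianSmoothing]
  exact (integral_integral_swap hint).symm

lemma ofReal_gaussianSmoothing {v : ℝ} (hv : 0 < v) (μ : Measure V) [IsProbabilityMeasure μ]
    (x : V) :
    (gaussianSmoothing μ v x : ℂ) = ((2 * π) ^ finrank ℝ V : ℝ)⁻¹
      * ∫ ξ : V, Real.exp (-(v / 2) * ‖ξ‖ ^ 2) * cexp (-⟪x, ξ⟫ * I) * charFun μ ξ := by
  have hint : Integrable (fun p : V × V ↦
      (Real.exp (-(v / 2) * ‖p.2‖ ^ 2) * cexp (-⟪x - p.1, p.2⟫ * I) : ℂ)) (μ.prod volume) := by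
    have h := (integrable_const (1 : ℝ) (μ := μ)).mul_prod
      (integrable_exp_neg_mul_sq_norm (V := V) (half_pos hv))
    refine h.mono (by fun_prop) (ae_of_all _ fun p ↦ le_of_eq ?_)
    rw [norm_mul, ← Complex.ofReal_neg, Complex.norm_exp_ofReal_mul_I, Complex.norm_real, mul_one,
      one_mul]
  have hsplit : ∀ ξ w : V, cexp (-⟪x - w, ξ⟫ * I) = cexp (-⟪x, ξ⟫ * I) * cexp (⟪w, ξ⟫ * I) := by
    intro ξ w
    rw [← Complex.exp_add, inner_sub_left]
    push_cast
    ring_nf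
  rw [gaussianSmoothing, ← integral_complex_ofReal]
  simp_rw [ofReal_isotropicGaussianPDFReal hv]
  rw [integral_const_mul, integral_integral_swap hint]
  simp_rw [hsplit, ← mul_assoc, integral_const_mul, charFun_apply]

/-- The Gaussian-weighted `L¹` distance of characteristic functions, with the constant of Fourier
inversion: it bounds the distance between the densities of `μ` and `ν` after both are smoothed by
an independent Gaussian of variance `v`. -/
noncomputable def charFunDist (v : ℝ) (μ ν : Measure V) : ℝ :=
  ((2 * π) ^ finrank ℝ V)⁻¹
    * ∫ ξ, Real.exp (-(v / 2) * ‖ξ‖ ^ 2) * ‖charFun μ ξ - charFun ν ξ‖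

lemma charFunDist_comm (v : ℝ) (μ ν : Measure V) : charFunDist v μ ν = charFunDist v ν μ := by
  simp_rw [charFunDist, norm_sub_rev]

lemma charFunDist_nonneg (v : ℝ) (μ ν : Measure V) : 0 ≤ charFunDist v μ ν := by
  unfold charFunDist
  positivity

lemma integrable_exp_mul_charFun {v : ℝ} (hv : 0 < v) (μ : Measure V) [IsProbabilityMeasure μ]
    (x : V) : Integrable fun ξ : V ↦
      (Real.exp (-(v / 2) * ‖ξ‖ ^ 2) * cexp (-⟪x, ξ⟫ * I) * charFun μ ξ : ℂ) := by
  refine (integrable_exp_neg_mul_sq_norm (half_pos hv)).mono (by fun_prop)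
    (ae_of_all _ fun ξ ↦ ?_)
  rw [norm_mul, norm_mul, ← Complex.ofReal_neg, Complex.norm_exp_ofReal_mul_I, mul_one,
    Complex.norm_real]
  exact mul_le_of_le_one_right (norm_nonneg _) (norm_charFun_le_one ξ)

lemma abs_gaussianSmoothing_sub_le {v : ℝ} (hv : 0 < v) (μ ν : Measure V)
    [IsProbabilityMeasure μ] [IsProbabilityMeasure ν] (x : V) :
    |gaussianSmoothing μ v x - gaussianSmoothing ν v x| ≤ charFunDist v μ ν := by
  rw [← Real.norm_eq_abs, ← Complex.norm_real, Complex.ofReal_sub, ofReal_gaussianSmoothing hv,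
    ofReal_gaussianSmoothing hv, ← mul_sub, ← integral_sub (integrable_exp_mul_charFun hv μ x)
    (integrable_exp_mul_charFun hv ν x), norm_mul, Complex.norm_real,
    Real.norm_of_nonneg (by positivity), charFunDist]
  gcongr
  refine (norm_integral_le_integral_norm _).trans_eq (integral_congr_ae (ae_of_all _ fun ξ ↦ ?_))
  simp only [← mul_sub, norm_mul, Complex.norm_real, ← Complex.ofReal_neg,
    Complex.norm_exp_ofReal_mul_I, mul_one, Real.norm_of_nonneg (Real.exp_pos _).le]

lemma abs_conv_isotropicGaussian_real_sub_le {v : ℝ} (hv : 0 < v) (μ ν : Measure V)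
    [IsProbabilityMeasure μ] [IsProbabilityMeasure ν] {A : Set V} (hA : MeasurableSet A)
    (hvol : volume A < ∞) :
    |(μ ∗ isotropicGaussian V v).real A - (ν ∗ isotropicGaussian V v).real A|
      ≤ charFunDist v μ ν * volume.real A := by
  rw [← Real.norm_eq_abs, conv_isotropicGaussian_real hv μ hA, conv_isotropicGaussian_real hv ν hA,
    ← integral_sub (integrable_gaussianSmoothing hv μ).integrableOn
      (integrable_gaussianSmoothing hv ν).integrableOn]
  exact norm_setIntegral_le_of_norm_le_const hvol fun x _ ↦ abs_gaussianSmoothing_sub_le hv μ ν x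

lemma measureReal_closedBall_le_add_charFunDist {v : ℝ} (hv : 0 < v) (μ ν : Measure V)
    [IsProbabilityMeasure μ] [IsProbabilityMeasure ν] (c : V) (R δ : ℝ) :
    μ.real (closedBall c R) ≤ ν.real (closedBall c (R + 2 * δ))
      + 2 * (isotropicGaussian V v).real (closedBall 0 δ)ᶜ
      + charFunDist v μ ν * volume.real (closedBall c (R + δ)) := by
  have := isProbabilityMeasure_isotropicGaussian (V := V) hv
  have hadd : closedBall c R + closedBall 0 δ ⊆ closedBall c (R + δ) := by
    rintro _ ⟨x, hx, y, hy, rfl⟩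
    simp only [mem_closedBall, dist_eq_norm, sub_zero] at hx hy ⊢
    exact (add_sub_right_comm x y c ▸ norm_add_le _ _).trans (add_le_add hx hy)
  have hsub : closedBall c (R + δ) - closedBall 0 δ ⊆ closedBall c (R + 2 * δ) := by
    rintro _ ⟨x, hx, y, hy, rfl⟩
    simp only [mem_closedBall, dist_eq_norm, sub_zero] at hx hy ⊢
    have := norm_sub_le (x - c) y
    rw [sub_right_comm]
    linarith
  have hμ := measureReal_le_conv_add_compl (μ := μ) (γ := isotropicGaussian V v)
    measurableSet_closedBall hadd
  have hν := conv_measureReal_le_add_compl (μ := ν) (γ := isotropicGaussian V v)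
    measurableSet_closedBall hsub
  have hdist := (abs_le.1 (abs_conv_isotropicGaussian_real_sub_le hv μ ν
    (measurableSet_closedBall (x := c) (ε := R + δ)) measure_closedBall_lt_top)).2
  linarith

end Smoothing

section Plane

variable {V : Type*} [NormedAddCommGroup V] [InnerProductSpace ℝ V] [FiniteDimensional ℝ V]
  [MeasurableSpace V] [BorelSpace V]

lemma volume_real_closedBall_of_finrank_eq_two (hd : finrank ℝ V = 2) (c : V) {r : ℝ}
    (hr : 0 ≤ r) : volume.real (closedBall c r) = π * r ^ 2 := by
  have := Module.nontrivial_of_finrank_pos (R := ℝ) (M := V) (by omega)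
  rw [Measure.real, InnerProductSpace.volume_closedBall_of_dim_even (k := 1) (by omega), hd]
  simp [ENNReal.toReal_ofReal hr, Real.pi_nonneg, mul_comm]

lemma setIntegral_closedBall_zero_fun_norm (hd : finrank ℝ V = 2) (f : ℝ → ℝ) {R : ℝ}
    (hR : 0 ≤ R) :
    ∫ x in closedBall (0 : V) R, f ‖x‖ = 2 * π * ∫ y in (0 : ℝ)..R, y * f y := by
  have := Module.nontrivial_of_finrank_pos (R := ℝ) (M := V) (by omega)
  have hball : volume.real (ball (0 : V) 1) = π := by
    simpa [Measure.real, Measure.addHaar_closedBall_eq_addHaar_ball] using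
      volume_real_closedBall_of_finrank_eq_two hd (0 : V) zero_le_one
  have hindicator : ∀ x : V, (closedBall 0 R).indicator (fun x ↦ f ‖x‖) x
      = (Set.Iic R).indicator f ‖x‖ := by
    intro x
    by_cases hx : ‖x‖ ≤ R <;> simp [Set.indicator, hx]
  rw [← integral_indicator measurableSet_closedBall]
  simp_rw [hindicator]
  rw [integral_fun_norm_addHaar, hd, hball, nsmul_eq_mul, smul_eq_mul, ← mul_assoc,
    intervalIntegral.integral_of_le hR, ← Set.Ioi_inter_Iic,
    ← setIntegral_indicator measurableSet_Iic]
  congr 1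
  refine setIntegral_congr_fun measurableSet_Ioi fun y _ ↦ ?_
  by_cases hy : y ≤ R <;> simp [Set.indicator, hy]

lemma isotropicGaussian_real_closedBall_zero (hd : finrank ℝ V = 2) {v R : ℝ} (hv : 0 < v)
    (hR : 0 ≤ R) :
    (isotropicGaussian V v).real (closedBall 0 R) = 1 - Real.exp (-(2 * v)⁻¹ * R ^ 2) := by
  set f : ℝ → ℝ := fun r ↦ (2 * π * v)⁻¹ * Real.exp (-(2 * v)⁻¹ * r ^ 2) with hf
  have hpdf : ∀ x : V, isotropicGaussianPDFReal v x = f ‖x‖ := by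
    intro x
    rw [isotropicGaussianPDFReal, hd, Nat.cast_ofNat, div_self two_ne_zero, Real.rpow_neg_one]
  have hderiv : ∀ r : ℝ,
      HasDerivAt (fun r ↦ -(2 * π)⁻¹ * Real.exp (-(2 * v)⁻¹ * r ^ 2)) (r * f r) r := by
    intro r
    refine ((((hasDerivAt_pow 2 r).const_mul (-(2 * v)⁻¹)).exp).const_mul
      (-(2 * π)⁻¹)).congr_deriv ?_
    simp only [hf]
    push_cast
    field_simp
  rw [isotropicGaussian_real hv measurableSet_closedBall]
  simp_rw [hpdf]
  rw [setIntegral_closedBall_zero_fun_norm hd f hR,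
    intervalIntegral.integral_eq_sub_of_hasDerivAt (fun r _ ↦ hderiv r)
      (Continuous.intervalIntegrable (by fun_prop) _ _), zero_pow two_ne_zero, mul_zero,
    Real.exp_zero]
  field_simp
  ring

lemma isotropicGaussian_real_compl_closedBall_zero (hd : finrank ℝ V = 2) {v R : ℝ} (hv : 0 < v)
    (hR : 0 ≤ R) :
    (isotropicGaussian V v).real (closedBall 0 R)ᶜ = Real.exp (-(2 * v)⁻¹ * R ^ 2) := by
  have := isProbabilityMeasure_isotropicGaussian (V := V) hv
  rw [probReal_compl_eq_one_sub measurableSet_closedBall,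
    isotropicGaussian_real_closedBall_zero hd hv hR, sub_sub_cancel]

lemma abs_exp_neg_sq_div_two_sub_le (a b : ℝ) :
    |Real.exp (-(b ^ 2 / 2)) - Real.exp (-(a ^ 2 / 2))| ≤ |b - a| := by
  have hderiv : ∀ r : ℝ,
      HasDerivAt (fun r ↦ Real.exp (-(r ^ 2 / 2))) (Real.exp (-(r ^ 2 / 2)) * -r) r := by
    intro r
    refine (((hasDerivAt_pow 2 r).div_const 2).neg.exp).congr_deriv ?_
    simp only [Pi.neg_apply]
    push_cast
    ring
  have hbound : ∀ r : ℝ, ‖Real.exp (-(r ^ 2 / 2)) * -r‖ ≤ 1 := by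
    intro r
    rw [norm_mul, norm_neg, Real.norm_of_nonneg (Real.exp_pos _).le, Real.exp_neg,
      inv_mul_le_one₀ (Real.exp_pos _), Real.norm_eq_abs]
    have := Real.add_one_le_exp (r ^ 2 / 2)
    nlinarith [sq_nonneg (|r| - 1), sq_abs r]
  simpa using convex_univ.norm_image_sub_le_of_norm_hasDerivWithin_le
    (fun r _ ↦ (hderiv r).hasDerivWithinAt) (fun r _ ↦ hbound r) (Set.mem_univ a) (Set.mem_univ b)

lemma isotropicGaussian_one_real_closedBall_zero (hd : finrank ℝ V = 2) (R : ℝ) :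
    (isotropicGaussian V 1).real (closedBall 0 R) = 1 - Real.exp (-(max R 0 ^ 2 / 2)) := by
  rcases le_or_gt 0 R with hR | hR
  · rw [isotropicGaussian_real_closedBall_zero hd one_pos hR, max_eq_left hR]
    ring_nf
  · simp [closedBall_eq_empty.2 hR, max_eq_right hR.le]

lemma isotropicGaussian_one_real_closedBall_zero_add_le (hd : finrank ℝ V = 2) (R : ℝ) {s : ℝ}
    (hs : 0 ≤ s) :
    (isotropicGaussian V 1).real (closedBall 0 (R + s))
      ≤ (isotropicGaussian V 1).real (closedBall 0 R) + s := by
  have hexp := (abs_le.1 (abs_exp_neg_sq_div_two_sub_le (max R 0) (max (R + s) 0))).1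
  have hmax := abs_max_sub_max_le_abs (R + s) R 0
  rw [add_sub_cancel_left, abs_of_nonneg hs] at hmax
  rw [isotropicGaussian_one_real_closedBall_zero hd, isotropicGaussian_one_real_closedBall_zero hd]
  linarith

lemma abs_measureReal_closedBall_zero_sub_isotropicGaussian_le (hd : finrank ℝ V = 2)
    (μ : Measure V) [IsProbabilityMeasure μ] {v R δ : ℝ} (hv : 0 < v) (hR : 0 ≤ R) (hδ : 0 ≤ δ) :
    |μ.real (closedBall 0 R) - (isotropicGaussian V 1).real (closedBall 0 R)|
      ≤ 2 * δ + 2 * Real.exp (-(2 * v)⁻¹ * δ ^ 2)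
        + charFunDist v μ (isotropicGaussian V 1) * (π * (R + δ) ^ 2) := by
  have := isProbabilityMeasure_isotropicGaussian (V := V) one_pos
  set ν := isotropicGaussian V 1
  have hupper := measureReal_closedBall_le_add_charFunDist hv μ ν 0 R δ
  have hlower := measureReal_closedBall_le_add_charFunDist hv ν μ 0 (R - 2 * δ) δ
  have hcontUpper := isotropicGaussian_one_real_closedBall_zero_add_le hd R (s := 2 * δ)
    (by positivity)
  have hcontLower := isotropicGaussian_one_real_closedBall_zero_add_le hd (R - 2 * δ) (s := 2 * δ)
    (by positivity)
  have hvol : charFunDist v μ ν * volume.real (closedBall (0 : V) (R - 2 * δ + δ))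
      ≤ charFunDist v μ ν * (π * (R + δ) ^ 2) := by
    rw [← volume_real_closedBall_of_finrank_eq_two hd (0 : V) (add_nonneg hR hδ)]
    gcongr
    · exact charFunDist_nonneg v μ ν
    · exact measure_closedBall_lt_top.ne
    · linarith
  rw [isotropicGaussian_real_compl_closedBall_zero hd hv hδ] at hupper hlower
  rw [volume_real_closedBall_of_finrank_eq_two hd 0 (add_nonneg hR hδ)] at hupper
  rw [charFunDist_comm, sub_add_cancel] at hlower
  rw [sub_add_cancel] at hcontLower
  rw [abs_le]
  constructor <;> linarith

end Plane

lemma abs_measureReal_sub_le_of_subset {Ω : Type*} [MeasurableSpace Ω] {μ ν : Measure Ω}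
    [IsProbabilityMeasure μ] [IsProbabilityMeasure ν] {A A' : Set Ω} (hA : MeasurableSet A)
    (h : A ⊆ A') :
    |μ.real A' - ν.real A'| ≤ |μ.real A - ν.real A| + ν.real Aᶜ := by
  have hμ : μ.real A ≤ μ.real A' := measureReal_mono h
  have hν : ν.real A ≤ ν.real A' := measureReal_mono h
  have hμ' : μ.real A' ≤ 1 := measureReal_le_one
  have hν' : ν.real A' ≤ 1 := measureReal_le_one
  have hdiff := abs_le.1 (le_refl |μ.real A - ν.real A|)
  rw [probReal_compl_eq_one_sub hA, abs_le]
  constructor <;> linarith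

section NormalizedSum

lemma abs_pow_sub_exp_le {n : ℕ} (hn : 2 ≤ n) {a s C : ℝ} (hs : 0 ≤ s) (hC : 0 ≤ C)
    (ha : |a| ≤ Real.exp (-(s / n / 4)))
    (hexp : |a - Real.exp (-(s / n / 2))| ≤ C * (s / n) ^ 2) :
    |a ^ n - Real.exp (-(s / 2))| ≤ 512 * C / n * Real.exp (-(s / 16)) := by
  have hn0 : (2 : ℝ) ≤ n := by exact_mod_cast hn
  set b := Real.exp (-(s / n / 2)) with hb
  have hbn : b ^ n = Real.exp (-(s / 2)) := by
    rw [hb, ← Real.exp_nat_mul]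
    congr 1
    field_simp
  have hmax : max |a| |b| ≤ Real.exp (-(s / n / 4)) := by
    refine max_le ha ?_
    rw [abs_of_pos (Real.exp_pos _)]
    gcongr
    norm_num
  have hpow : Real.exp (-(s / n / 4)) ^ (n - 1) ≤ Real.exp (-(s / 8)) := by
    rw [← Real.exp_nat_mul, Nat.cast_sub (by omega), Nat.cast_one, Real.exp_le_exp]
    have hmul : (n : ℝ) * (s / n) = s := by field_simp
    have hle : 2 * (s / n) ≤ n * (s / n) := by gcongr
    linarith
  have hquad : s ^ 2 ≤ 512 * Real.exp (s / 16) := by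
    linarith [Real.quadratic_le_exp_of_nonneg (x := s / 16) (by positivity)]
  calc |a ^ n - Real.exp (-(s / 2))| = |a ^ n - b ^ n| := by rw [hbn]
    _ ≤ |a - b| * n * max |a| |b| ^ (n - 1) := abs_pow_sub_pow_le ..
    _ ≤ C * (s / n) ^ 2 * n * Real.exp (-(s / n / 4)) ^ (n - 1) := by gcongr
    _ ≤ C * (s / n) ^ 2 * n * Real.exp (-(s / 8)) := by gcongr
    _ = C / n * s ^ 2 * Real.exp (-(s / 8)) := by field_simp
    _ ≤ C / n * (512 * Real.exp (s / 16)) * Real.exp (-(s / 8)) := by gcongr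
    _ = 512 * C / n * (Real.exp (s / 16) * Real.exp (-(s / 8))) := by ring
    _ = 512 * C / n * Real.exp (-(s / 16)) := by
        rw [← Real.exp_add]
        ring_nf

variable {V : Type*} [NormedAddCommGroup V] [InnerProductSpace ℝ V] [MeasurableSpace V]

lemma integrable_cos_inner [OpensMeasurableSpace V] [SecondCountableTopology V] (P : Measure V)
    [IsFiniteMeasure P] (ζ : V) : Integrable (fun x ↦ Real.cos ⟪x, ζ⟫) P :=
  (integrable_const (1 : ℝ)).mono' (by fun_prop) (ae_of_all _ fun x ↦ Real.abs_cos_le_one _)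

lemma charFun_eq_integral_cos [BorelSpace V] [SecondCountableTopology V] (P : Measure V)
    [IsFiniteMeasure P] [P.IsNegInvariant] (ζ : V) :
    charFun P ζ = (∫ x, Real.cos ⟪x, ζ⟫ ∂P : ℝ) := by
  have hconj : (starRingEnd ℂ) (charFun P ζ) = charFun P ζ := by
    rw [← charFun_neg, charFun_apply, charFun_apply, ← integral_neg_eq_self]
    simp only [inner_neg_left, inner_neg_right, neg_neg]
  have hint : Integrable (fun x ↦ cexp (⟪x, ζ⟫ * I)) P :=
    (integrable_const (1 : ℝ)).mono' (by fun_prop)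
      (ae_of_all _ fun x ↦ (Complex.norm_exp_ofReal_mul_I _).le)
  rw [← Complex.conj_eq_iff_re.1 hconj, charFun_apply, ← reCLM_apply,
    ← reCLM.integral_comp_comm hint]
  simp only [reCLM_apply, Complex.exp_ofReal_mul_I_re]

/-- A symmetric law with identity covariance, supported in the ball of radius `√K`: the class of
increments for which the rate in the central limit theorem is made explicit. -/
structure IsBoundedIsotropic (P : Measure V) (K : ℝ) : Prop where
  isNegInvariant : P.IsNegInvariant
  norm_sq_le : ∀ᵐ x ∂P, ‖x‖ ^ 2 ≤ K
  integral_inner_sq : ∀ ζ, ∫ x, ⟪x, ζ⟫ ^ 2 ∂P = ‖ζ‖ ^ 2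

namespace IsBoundedIsotropic

variable {P : Measure V} {K : ℝ}

lemma inner_sq_le (hP : IsBoundedIsotropic P K) (ζ : V) :
    ∀ᵐ x ∂P, ⟪x, ζ⟫ ^ 2 ≤ K * ‖ζ‖ ^ 2 := by
  filter_upwards [hP.norm_sq_le] with x hx
  calc ⟪x, ζ⟫ ^ 2 ≤ (‖x‖ * ‖ζ‖) ^ 2 := sq_le_sq.2 (by
        rw [abs_of_nonneg (by positivity : 0 ≤ ‖x‖ * ‖ζ‖)]
        exact abs_real_inner_le_norm x ζ)
    _ = ‖x‖ ^ 2 * ‖ζ‖ ^ 2 := mul_pow ..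
    _ ≤ K * ‖ζ‖ ^ 2 := by gcongr

variable [IsProbabilityMeasure P]

lemma nonneg (hP : IsBoundedIsotropic P K) : 0 ≤ K := by
  obtain ⟨x, hx⟩ := hP.norm_sq_le.exists
  exact (sq_nonneg _).trans hx

variable [FiniteDimensional ℝ V] [BorelSpace V]

lemma integrable_inner_sq (hP : IsBoundedIsotropic P K) (ζ : V) :
    Integrable (fun x ↦ ⟪x, ζ⟫ ^ 2) P := by
  refine (integrable_const (K * ‖ζ‖ ^ 2)).mono' (by fun_prop) ?_
  filter_upwards [hP.inner_sq_le ζ] with x hx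
  rwa [Real.norm_of_nonneg (sq_nonneg _)]

lemma norm_sq_le_mul (hP : IsBoundedIsotropic P K) (ζ : V) : ‖ζ‖ ^ 2 ≤ K * ‖ζ‖ ^ 2 := by
  rw [← hP.integral_inner_sq]
  simpa [hP.integral_inner_sq] using
    integral_mono_ae (hP.integrable_inner_sq ζ) (integrable_const _) (hP.inner_sq_le ζ)

lemma finrank_le (hP : IsBoundedIsotropic P K) : finrank ℝ V ≤ K := by
  have hsum : ∀ x : V, ∑ i, ⟪x, stdOrthonormalBasis ℝ V i⟫ ^ 2 = ‖x‖ ^ 2 := by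
    intro x
    simpa using (stdOrthonormalBasis ℝ V).sum_sq_norm_inner_left x
  have hint : Integrable (fun x : V ↦ ‖x‖ ^ 2) P := by
    simp_rw [← hsum]
    exact integrable_finsetSum _ fun i _ ↦ hP.integrable_inner_sq _
  calc (finrank ℝ V : ℝ) = ∑ i, ∫ x, ⟪x, stdOrthonormalBasis ℝ V i⟫ ^ 2 ∂P := by
        simp [hP.integral_inner_sq]
    _ = ∫ x, ‖x‖ ^ 2 ∂P := by
        rw [← integral_finsetSum _ fun i _ ↦ hP.integrable_inner_sq _]
        simp_rw [hsum]
    _ ≤ ∫ _, K ∂P := integral_mono_ae hint (integrable_const K) hP.norm_sq_le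
    _ = K := by simp

lemma abs_integral_cos_sub_le (hP : IsBoundedIsotropic P K) {ζ : V} (hζ : K * ‖ζ‖ ^ 2 ≤ 1) :
    |∫ x, Real.cos ⟪x, ζ⟫ ∂P - (1 - ‖ζ‖ ^ 2 / 2)| ≤ 5 / 96 * K * (‖ζ‖ ^ 2) ^ 2 := by
  have hpoint : ∀ᵐ x ∂P, ‖Real.cos ⟪x, ζ⟫ - (1 - ⟪x, ζ⟫ ^ 2 / 2)‖
      ≤ 5 / 96 * (K * ‖ζ‖ ^ 2) * ⟪x, ζ⟫ ^ 2 := by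
    filter_upwards [hP.inner_sq_le ζ] with x hx
    have hle := Real.cos_bound ((sq_le_one_iff_abs_le_one _).1 (hx.trans hζ))
    have h4 : |⟪x, ζ⟫| ^ 4 = ⟪x, ζ⟫ ^ 2 * ⟪x, ζ⟫ ^ 2 := by
      rw [← sq_abs]
      ring
    rw [h4] at hle
    refine hle.trans ?_
    nlinarith [sq_nonneg ⟪x, ζ⟫]
  have hint := hP.integrable_inner_sq ζ
  have hquad : Integrable (fun x ↦ 1 - ⟪x, ζ⟫ ^ 2 / 2) P :=
    (integrable_const 1).sub (hint.div_const 2)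
  have htaylor : ∫ x, (1 - ⟪x, ζ⟫ ^ 2 / 2) ∂P = 1 - ‖ζ‖ ^ 2 / 2 := by
    rw [integral_sub (integrable_const 1) (hint.div_const 2), integral_div, hP.integral_inner_sq]
    simp
  rw [← htaylor, ← integral_sub (integrable_cos_inner P ζ) hquad, ← Real.norm_eq_abs]
  refine (norm_integral_le_of_norm_le (hint.const_mul _) hpoint).trans_eq ?_
  rw [integral_const_mul, hP.integral_inner_sq]
  ring

lemma abs_integral_cos_sub_exp_le (hP : IsBoundedIsotropic P K) {ζ : V}
    (hζ : K * ‖ζ‖ ^ 2 ≤ 1) :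
    |∫ x, Real.cos ⟪x, ζ⟫ ∂P - Real.exp (-(‖ζ‖ ^ 2 / 2))| ≤ 5 / 16 * K * (‖ζ‖ ^ 2) ^ 2 := by
  have hK := hP.norm_sq_le_mul ζ
  have hcos := hP.abs_integral_cos_sub_le hζ
  have hexp := Real.abs_exp_sub_one_sub_id_le (x := -(‖ζ‖ ^ 2 / 2)) (by
    rw [abs_neg, abs_of_nonneg (by positivity)]
    linarith)
  have hmul : ‖ζ‖ ^ 2 * ‖ζ‖ ^ 2 ≤ K * ‖ζ‖ ^ 2 * ‖ζ‖ ^ 2 := by gcongr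
  rw [abs_le] at hcos hexp ⊢
  constructor <;> linarith

lemma abs_integral_cos_le (hP : IsBoundedIsotropic P K) {ζ : V} (hζ : K * ‖ζ‖ ^ 2 ≤ 1) :
    |∫ x, Real.cos ⟪x, ζ⟫ ∂P| ≤ Real.exp (-(‖ζ‖ ^ 2 / 4)) := by
  have hK := hP.norm_sq_le_mul ζ
  have hcos := abs_le.1 (hP.abs_integral_cos_sub_le hζ)
  have hexp := Real.add_one_le_exp (-(‖ζ‖ ^ 2 / 4))
  have hmul : K * ‖ζ‖ ^ 2 * ‖ζ‖ ^ 2 ≤ 1 * ‖ζ‖ ^ 2 := by gcongr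
  rw [abs_of_nonneg (by linarith)]
  linarith

end IsBoundedIsotropic

/-- The law of `n^(-1/2) (X₁ + ⋯ + Xₙ)` for independent `Xᵢ` with law `P`. -/
noncomputable def normalizedSumLaw (P : Measure V) (n : ℕ) : Measure V :=
  (Measure.pi fun _ : Fin n ↦ P).map fun x ↦ (√n)⁻¹ • ∑ i, x i

variable [FiniteDimensional ℝ V] [BorelSpace V] {P : Measure V} [IsProbabilityMeasure P] {K : ℝ}

instance isProbabilityMeasure_normalizedSumLaw (n : ℕ) :
    IsProbabilityMeasure (normalizedSumLaw P n) :=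
  Measure.isProbabilityMeasure_map (by fun_prop)

lemma charFun_normalizedSumLaw (P : Measure V) [IsProbabilityMeasure P] (n : ℕ) (ξ : V) :
    charFun (normalizedSumLaw P n) ξ = charFun P ((√n)⁻¹ • ξ) ^ n := by
  rw [normalizedSumLaw, charFun_map_smul_comp (by fun_prop), charFun_map_sum_pi_eq_prod]
  simp

lemma norm_charFun_normalizedSumLaw_sub_le (hP : IsBoundedIsotropic P K) {n : ℕ} (hn : 2 ≤ n)
    {ξ : V} (hξ : K * ‖ξ‖ ^ 2 ≤ n) :
    ‖charFun (normalizedSumLaw P n) ξ - charFun (isotropicGaussian V 1) ξ‖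
      ≤ 160 * K / n * Real.exp (-(1 / 16) * ‖ξ‖ ^ 2) := by
  have hn0 : (0 : ℝ) < n := by positivity
  have hnorm : ‖(√n)⁻¹ • ξ‖ ^ 2 = ‖ξ‖ ^ 2 / n := by
    rw [norm_smul, mul_pow, Real.norm_eq_abs, sq_abs, inv_pow, Real.sq_sqrt hn0.le,
      inv_mul_eq_div]
  have hζ : K * ‖(√n)⁻¹ • ξ‖ ^ 2 ≤ 1 := by
    rwa [hnorm, ← mul_div_assoc, div_le_one hn0]
  have hcos := hP.abs_integral_cos_le hζ
  have hexp := hP.abs_integral_cos_sub_exp_le hζ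
  rw [hnorm] at hcos hexp
  have h := abs_pow_sub_exp_le hn (sq_nonneg ‖ξ‖) (by linarith [hP.nonneg]) hcos hexp
  have := hP.isNegInvariant
  rw [charFun_normalizedSumLaw, charFun_eq_integral_cos, charFun_isotropicGaussian one_pos,
    ← Complex.ofReal_pow, ← Complex.ofReal_sub, Complex.norm_real, Real.norm_eq_abs]
  convert h using 1 <;> ring_nf

lemma exp_mul_norm_charFun_normalizedSumLaw_sub_le (hP : IsBoundedIsotropic P K) {n : ℕ}
    (hn : 2 ≤ n) {v : ℝ} (hv : 0 < v) (ξ : V) :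
    Real.exp (-(v / 2) * ‖ξ‖ ^ 2)
        * ‖charFun (normalizedSumLaw P n) ξ - charFun (isotropicGaussian V 1) ξ‖
      ≤ 160 * K / n * Real.exp (-(1 / 16) * ‖ξ‖ ^ 2)
        + 2 * Real.exp (-(v * n / (4 * K))) * Real.exp (-(v / 4) * ‖ξ‖ ^ 2) := by
  have := isProbabilityMeasure_isotropicGaussian (V := V) one_pos
  have := hP.nonneg
  rcases le_or_gt (K * ‖ξ‖ ^ 2) n with hξ | hξ
  · have hlow := norm_charFun_normalizedSumLaw_sub_le hP hn hξ
    have hdamp : Real.exp (-(v / 2) * ‖ξ‖ ^ 2) ≤ 1 := by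
      rw [Real.exp_le_one_iff, neg_mul, Left.neg_nonpos_iff]
      positivity
    exact (mul_le_of_le_one_left (norm_nonneg _) hdamp).trans
      (hlow.trans (le_add_of_nonneg_right (by positivity)))
  · have hK0 : 0 < K :=
      pos_of_mul_pos_left (n.cast_nonneg.trans_lt hξ) (sq_nonneg ‖ξ‖)
    have hμ : ‖charFun (normalizedSumLaw P n) ξ‖ ≤ 1 := norm_charFun_le_one ξ
    have hν : ‖charFun (isotropicGaussian V 1) ξ‖ ≤ 1 := norm_charFun_le_one ξ
    have hhigh : ‖charFun (normalizedSumLaw P n) ξ - charFun (isotropicGaussian V 1) ξ‖ ≤ 2 :=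
      (norm_sub_le _ _).trans (by linarith)
    have hdamp : v * n / (4 * K) ≤ v / 4 * ‖ξ‖ ^ 2 := by
      rw [div_le_iff₀ (by positivity)]
      nlinarith
    calc _ ≤ Real.exp (-(v / 4) * ‖ξ‖ ^ 2 + -(v / 4) * ‖ξ‖ ^ 2) * 2 := by
          rw [← add_mul, show -(v / 4) + -(v / 4) = -(v / 2) by ring]
          gcongr
      _ ≤ Real.exp (-(v * n / (4 * K)) + -(v / 4) * ‖ξ‖ ^ 2) * 2 := by
          gcongr
          linarith
      _ = 2 * Real.exp (-(v * n / (4 * K))) * Real.exp (-(v / 4) * ‖ξ‖ ^ 2) := by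
          rw [Real.exp_add]
          ring
      _ ≤ _ := le_add_of_nonneg_left (by positivity)

lemma charFunDist_normalizedSumLaw_le (hd : finrank ℝ V = 2) (hP : IsBoundedIsotropic P K)
    {n : ℕ} (hn : 2 ≤ n) {v : ℝ} (hv : 0 < v) :
    charFunDist v (normalizedSumLaw P n) (isotropicGaussian V 1)
      ≤ (640 * K / n + 2 / v * Real.exp (-(v * n / (4 * K)))) / π := by
  have hgauss : ∀ {b : ℝ}, 0 < b → ∫ ξ : V, Real.exp (-b * ‖ξ‖ ^ 2) = π / b := by
    intro b hb
    rw [GaussianFourier.integral_rexp_neg_mul_sq_norm hb, hd, Nat.cast_ofNat,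
      div_self two_ne_zero, Real.rpow_one]
  have hlow := (integrable_exp_neg_mul_sq_norm (V := V) (b := 1 / 16) (by norm_num)).const_mul
    (160 * K / n)
  have hhigh := (integrable_exp_neg_mul_sq_norm (V := V) (b := v / 4) (by positivity)).const_mul
    (2 * Real.exp (-(v * n / (4 * K))))
  have hmono := integral_mono_of_nonneg (ae_of_all _ fun ξ ↦ by positivity)
    (hlow.add hhigh) (ae_of_all _ (exp_mul_norm_charFun_normalizedSumLaw_sub_le hP hn hv))
  rw [integral_add' hlow hhigh, integral_const_mul, integral_const_mul, hgauss (by norm_num),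
    hgauss (by positivity)] at hmono
  rw [charFunDist, hd]
  refine (mul_le_mul_of_nonneg_left hmono (by positivity)).trans_eq ?_
  field_simp
  ring

end NormalizedSum

section Rate

lemma exp_neg_div_two_le {t : ℝ} (ht : 0 < t) : Real.exp (-(t / 2)) ≤ 2 / t := by
  rw [Real.exp_neg, ← inv_div t]
  refine inv_anti₀ (by positivity) ?_
  linarith [Real.add_one_le_exp (t / 2)]

lemma exp_neg_two_mul_le {t : ℝ} (ht : 0 < t) : Real.exp (-(2 * t)) ≤ 4 / t ^ 5 := by
  rw [Real.exp_neg, ← inv_div]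
  refine inv_anti₀ (by positivity) ?_
  have h := Real.pow_div_factorial_le_exp (2 * t) (by positivity) 5
  norm_num [Nat.factorial] at h
  have : 0 < t ^ 5 := by positivity
  linarith

lemma exp_neg_inv_mul_sq_le {K m : ℝ} (hK : 2 ≤ K) (hm : 0 < m) :
    Real.exp (-(2 * (8 * K / m ^ 3))⁻¹ * (2 * K / m) ^ 2) ≤ K / m :=
  calc Real.exp (-(2 * (8 * K / m ^ 3))⁻¹ * (2 * K / m) ^ 2) = Real.exp (-(K * m / 2 / 2)) := by
        congr 1
        field_simp
        norm_num
    _ ≤ Real.exp (-(m / 2)) := by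
        gcongr
        nlinarith
    _ ≤ 2 / m := exp_neg_div_two_le hm
    _ ≤ K / m := by gcongr

variable {V : Type*} [NormedAddCommGroup V] [InnerProductSpace ℝ V] [FiniteDimensional ℝ V]
  [MeasurableSpace V] [BorelSpace V] {P : Measure V} [IsProbabilityMeasure P] {K : ℝ}

lemma charFunDist_normalizedSumLaw_le_of_pow_four_eq (hd : finrank ℝ V = 2)
    (hP : IsBoundedIsotropic P K) {n : ℕ} (hn : 2 ≤ n) {m : ℝ} (hm : m ^ 4 = n) (hm0 : 0 < m) :
    charFunDist (8 * K / m ^ 3) (normalizedSumLaw P n) (isotropicGaussian V 1)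
      ≤ (640 * K / m ^ 4 + 1 / (K * m ^ 2)) / π := by
  have hK : 2 ≤ K := by simpa [hd] using hP.finrank_le
  have hrate : 8 * K / m ^ 3 * n / (4 * K) = 2 * m := by
    rw [← hm]
    field_simp
    norm_num
  refine (charFunDist_normalizedSumLaw_le hd hP hn (by positivity)).trans ?_
  rw [hrate, ← hm]
  gcongr
  calc 2 / (8 * K / m ^ 3) * Real.exp (-(2 * m)) ≤ 2 / (8 * K / m ^ 3) * (4 / m ^ 5) := by
        gcongr
        exact exp_neg_two_mul_le hm0
    _ = 1 / (K * m ^ 2) := by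
        field_simp
        norm_num

-- Smoothing with variance `8 * K / m ^ 3` and enlarging the ball by `2 * K / m`: the first makes
-- the damped high frequencies negligible, the second captures all but `exp (-m / 2)` of the
-- smoothing mass.
lemma abs_normalizedSumLaw_real_closedBall_sub_le_of_sq_le (hd : finrank ℝ V = 2)
    (hP : IsBoundedIsotropic P K) {n : ℕ} {m R : ℝ} (hm : m ^ 4 = n) (hmK : 12 * K ≤ m)
    (hR : 0 ≤ R) (hRm : R ^ 2 ≤ m) :
    |(normalizedSumLaw P n).real (closedBall 0 R) - (isotropicGaussian V 1).real (closedBall 0 R)|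
      ≤ 11 * K / m := by
  have hK : 2 ≤ K := by simpa [hd] using hP.finrank_le
  have hm0 : 24 ≤ m := by linarith
  have hmpos : 0 < m := by linarith
  have hn : 2 ≤ n := by
    have : (2 : ℝ) ≤ n := by
      rw [← hm]
      nlinarith [one_le_pow₀ (n := 3) (by linarith : 1 ≤ m)]
    exact_mod_cast this
  have hv : 0 < 8 * K / m ^ 3 := by positivity
  have hball := abs_measureReal_closedBall_zero_sub_isotropicGaussian_le hd (normalizedSumLaw P n)
    hv hR (δ := 2 * K / m) (by positivity)
  have htail := exp_neg_inv_mul_sq_le hK hmpos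
  have hdist := charFunDist_normalizedSumLaw_le_of_pow_four_eq hd hP hn hm hmpos
  have hradius : (R + 2 * K / m) ^ 2 ≤ 3 * m := by
    have hδ : 2 * K / m ≤ 1 := by
      rw [div_le_one hmpos]
      linarith
    have hδ0 : 0 ≤ 2 * K / m := by positivity
    nlinarith [sq_nonneg (R - 2 * K / m)]
  have hmain : charFunDist (8 * K / m ^ 3) (normalizedSumLaw P n) (isotropicGaussian V 1)
      * (π * (R + 2 * K / m) ^ 2) ≤ 5 * K / m := by
    calc _ ≤ (640 * K / m ^ 4 + 1 / (K * m ^ 2)) / π * (π * (3 * m)) := by gcongr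
      _ = (1920 / m ^ 2 + 3 / K ^ 2) * (K / m) := by
          field_simp
          ring
      _ ≤ (1920 / 24 ^ 2 + 3 / 2 ^ 2) * (K / m) := by gcongr
      _ ≤ 5 * K / m := by
          rw [mul_div_assoc]
          gcongr
          norm_num
  calc _ ≤ 2 * (2 * K / m) + 2 * (K / m) + 5 * K / m := by linarith
    _ = 11 * K / m := by ring

lemma abs_normalizedSumLaw_real_closedBall_sub_le (hd : finrank ℝ V = 2)
    (hP : IsBoundedIsotropic P K) {n : ℕ} (hn : 0 < n) {R : ℝ} (hR : 0 ≤ R) :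
    |(normalizedSumLaw P n).real (closedBall 0 R) - (1 - Real.exp (-(R ^ 2 / 2)))|
      ≤ 12 * K / (n : ℝ) ^ ((1 : ℝ) / 4) := by
  have := isProbabilityMeasure_isotropicGaussian (V := V) one_pos
  have hgauss : (isotropicGaussian V 1).real (closedBall 0 R) = 1 - Real.exp (-(R ^ 2 / 2)) := by
    rw [isotropicGaussian_one_real_closedBall_zero hd, max_eq_left hR]
  rw [← hgauss]
  set m : ℝ := (n : ℝ) ^ ((1 : ℝ) / 4) with hm
  have hm4 : m ^ 4 = n := by
    rw [hm, ← Real.rpow_natCast, ← Real.rpow_mul (by positivity)]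
    norm_num
  have hmpos : 0 < m := by positivity
  have hK : 2 ≤ K := by simpa [hd] using hP.finrank_le
  rcases le_total m (12 * K) with hmK | hmK
  · calc _ ≤ (1 : ℝ) := abs_sub_le_of_nonneg_of_le measureReal_nonneg measureReal_le_one
          measureReal_nonneg measureReal_le_one
      _ ≤ 12 * K / m := by
          rw [le_div_iff₀ hmpos]
          linarith
  rcases le_total (R ^ 2) m with hRm | hRm
  · refine (abs_normalizedSumLaw_real_closedBall_sub_le_of_sq_le hd hP hm4 hmK hR hRm).trans ?_
    gcongr
    norm_num
  have hsq := Real.sq_sqrt hmpos.le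
  have hball := abs_normalizedSumLaw_real_closedBall_sub_le_of_sq_le hd hP hm4 hmK
    (Real.sqrt_nonneg m) hsq.le
  have htail : (isotropicGaussian V 1).real (closedBall 0 √m)ᶜ ≤ K / m := by
    rw [isotropicGaussian_real_compl_closedBall_zero hd one_pos (Real.sqrt_nonneg m), hsq]
    calc Real.exp (-(2 * 1)⁻¹ * m) = Real.exp (-(m / 2)) := by ring_nf
      _ ≤ 2 / m := exp_neg_div_two_le hmpos
      _ ≤ K / m := by gcongr
  calc _ ≤ _ := abs_measureReal_sub_le_of_subset measurableSet_closedBall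
        (closedBall_subset_closedBall (Real.sqrt_le_iff.2 ⟨hR, hRm⟩))
    _ ≤ 11 * K / m + K / m := add_le_add hball htail
    _ = 12 * K / m := by ring

end Rate

section Friedman

lemma chiSq_two_real_Iic {z : ℝ} (hz : 0 ≤ z) :
    (chiSq 2).real (Set.Iic z) = 1 - Real.exp (-(z / 2)) := by
  have := isProbabilityMeasure_expMeasure (r := 1 / 2) (by norm_num)
  have h := cdf_expMeasure_eq (r := 1 / 2) (by norm_num) z
  rw [if_pos hz, cdf_eq_real, expMeasure, one_div_mul_eq_div] at h
  rw [chiSq, Nat.cast_ofNat, div_self two_ne_zero, h]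

lemma toMeasure_uniformOfFintype_pi_eq {ι α : Type*} [Fintype ι] [DecidableEq ι] [Fintype α]
    [Nonempty α] [MeasurableSpace α] [MeasurableSingletonClass α] :
    (PMF.uniformOfFintype (ι → α)).toMeasure
      = Measure.pi fun _ ↦ (PMF.uniformOfFintype α).toMeasure := by
  refine Measure.ext_of_singleton fun f ↦ ?_
  simp only [Measure.pi_singleton,
    PMF.toMeasure_apply_singleton _ _ (measurableSet_singleton _), PMF.uniformOfFintype_apply]
  simp [ENNReal.inv_pow]

lemma map_equiv_toMeasure_uniformOfFintype {α : Type*} [Fintype α] [Nonempty α]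
    [MeasurableSpace α] [MeasurableSingletonClass α] (e : α ≃ α) :
    (PMF.uniformOfFintype α).toMeasure.map e = (PMF.uniformOfFintype α).toMeasure := by
  refine Measure.ext_of_singleton fun a ↦ ?_
  rw [Measure.map_apply (measurable_of_finite e) (measurableSet_singleton a),
    ← e.image_symm_eq_preimage, Set.image_singleton]
  simp only [PMF.toMeasure_apply_singleton _ _ (measurableSet_singleton _),
    PMF.uniformOfFintype_apply]

/-- The centred rank vector of one ranking of three treatments, in orthonormal coordinates of the
plane of vectors with coordinate sum zero. -/
noncomputable def rankVec (σ : Equiv.Perm (Fin 3)) : ℂ :=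
  ⟨(((σ 0 : ℕ) : ℝ) - ((σ 2 : ℕ) : ℝ)) / √2, √3 / √2 * (((σ 1 : ℕ) : ℝ) - 1)⟩

/-- The law of the rank vector of a uniformly random ranking. -/
noncomputable def rankLaw : Measure ℂ :=
  (PMF.uniformOfFintype (Equiv.Perm (Fin 3))).toMeasure.map rankVec

instance isProbabilityMeasure_rankLaw : IsProbabilityMeasure rankLaw :=
  Measure.isProbabilityMeasure_map (measurable_of_finite _).aemeasurable

lemma sum_perm_fin_three_val (σ : Equiv.Perm (Fin 3)) :
    ((σ 0 : ℕ) : ℝ) + ((σ 1 : ℕ) : ℝ) + ((σ 2 : ℕ) : ℝ) = 3 := by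
  have h : (σ 0 : ℕ) + (σ 1 : ℕ) + (σ 2 : ℕ) = 3 := by
    revert σ
    decide
  exact_mod_cast h

lemma normSq_mk_div_sqrt_two {a b c : ℝ} (h : a + b + c = 0) :
    normSq ⟨(a - c) / √2, √3 / √2 * b⟩ = a ^ 2 + b ^ 2 + c ^ 2 := by
  obtain rfl : b = -a - c := by linarith
  rw [normSq_mk, ← sq, ← sq, div_pow, mul_pow, div_pow, Real.sq_sqrt zero_le_two,
    Real.sq_sqrt zero_le_three]
  ring

lemma friedman_three_eq_norm_sq (n : ℕ) (ω : Fin n → Equiv.Perm (Fin 3)) :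
    friedman n 3 ω = ‖(√n)⁻¹ • ∑ i, rankVec (ω i)‖ ^ 2 := by
  set T : Fin 3 → ℝ := fun j ↦ ∑ i, (((ω i j : ℕ) : ℝ) - 1) with hT
  have hcoef : √12 / √((3 : ℝ) * (3 + 1) * n) = (√n)⁻¹ := by
    rw [show (3 : ℝ) * (3 + 1) * n = 12 * n by ring, Real.sqrt_mul (by norm_num),
      div_mul_cancel_left₀ (by positivity)]
  have hS : ∀ j, Sstat n 3 j ω = (√n)⁻¹ * T j := by
    intro j
    simp only [Sstat, rho, Nat.cast_ofNat, hcoef, hT]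
    congr 1
    exact Finset.sum_congr rfl fun i _ ↦ by ring
  have hT0 : T 0 + T 1 + T 2 = 0 := by
    simp only [hT, ← Finset.sum_add_distrib]
    exact Finset.sum_eq_zero fun i _ ↦ by linarith [sum_perm_fin_three_val (ω i)]
  have hsum : ∑ i, rankVec (ω i) = ⟨(T 0 - T 2) / √2, √3 / √2 * T 1⟩ := by
    refine Complex.ext ?_ ?_
    · simp only [Complex.re_sum, rankVec, hT, ← Finset.sum_sub_distrib, Finset.sum_div,
        sub_sub_sub_cancel_right]
    · simp only [Complex.im_sum, rankVec, hT, Finset.mul_sum]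
  rw [norm_smul, mul_pow, ← Complex.normSq_eq_norm_sq, hsum, normSq_mk_div_sqrt_two hT0,
    Real.norm_eq_abs, sq_abs, friedman, Fin.sum_univ_three, hS, hS, hS]
  ring

lemma norm_rankVec_sq (σ : Equiv.Perm (Fin 3)) : ‖rankVec σ‖ ^ 2 = 2 := by
  have hsq : ((σ 0 : ℕ) : ℝ) ^ 2 + ((σ 1 : ℕ) : ℝ) ^ 2 + ((σ 2 : ℕ) : ℝ) ^ 2 = 5 := by
    have h : (σ 0 : ℕ) ^ 2 + (σ 1 : ℕ) ^ 2 + (σ 2 : ℕ) ^ 2 = 5 := by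
      revert σ
      decide
    exact_mod_cast h
  have hsum := sum_perm_fin_three_val σ
  have h := normSq_mk_div_sqrt_two (a := (σ 0 : ℕ) - 1) (b := (σ 1 : ℕ) - 1) (c := (σ 2 : ℕ) - 1)
    (by linarith)
  rw [sub_sub_sub_cancel_right] at h
  rw [← Complex.normSq_eq_norm_sq, rankVec, h]
  linarith

lemma rankVec_revPerm_mul (σ : Equiv.Perm (Fin 3)) : rankVec (Fin.revPerm * σ) = -rankVec σ := by
  have hrev : ∀ k : Fin 3, ((Fin.revPerm k : ℕ) : ℝ) = 2 - (k : ℕ) := by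
    intro k
    fin_cases k <;> norm_num [Fin.revPerm]
  refine Complex.ext ?_ ?_
  · simp only [rankVec, Equiv.Perm.mul_apply, hrev, Complex.neg_re]
    ring
  · simp only [rankVec, Equiv.Perm.mul_apply, hrev, Complex.neg_im]
    ring

lemma integral_rankLaw {f : ℂ → ℝ} (hf : Measurable f) :
    ∫ x, f x ∂rankLaw = (∑ σ, f (rankVec σ)) / 6 := by
  rw [rankLaw, integral_map (measurable_of_finite _).aemeasurable hf.aestronglyMeasurable,
    PMF.integral_eq_sum, sum_div]
  simp [PMF.uniformOfFintype_apply, Fintype.card_perm, Nat.factorial, div_eq_inv_mul]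

lemma sum_inner_rankVec_sq (ζ : ℂ) : ∑ σ, ⟪rankVec σ, ζ⟫ ^ 2 = 6 * ‖ζ‖ ^ 2 := by
  set a : Equiv.Perm (Fin 3) → ℤ := fun σ ↦ (σ 0 : ℕ) - (σ 2 : ℕ) with ha
  set b : Equiv.Perm (Fin 3) → ℤ := fun σ ↦ (σ 1 : ℕ) - 1 with hb
  have haa : ∑ σ, (a σ : ℝ) ^ 2 = 12 := by exact_mod_cast (by decide : ∑ σ, a σ ^ 2 = 12)
  have hab : ∑ σ, (a σ * b σ : ℝ) = 0 := by exact_mod_cast (by decide : ∑ σ, a σ * b σ = 0)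
  have hbb : ∑ σ, (b σ : ℝ) ^ 2 = 4 := by exact_mod_cast (by decide : ∑ σ, b σ ^ 2 = 4)
  have hinner : ∀ σ, ⟪rankVec σ, ζ⟫ ^ 2
      = ζ.re ^ 2 / 2 * a σ ^ 2 + √3 * ζ.re * ζ.im * (a σ * b σ) + 3 / 2 * ζ.im ^ 2 * b σ ^ 2 := by
    intro σ
    have hlin : ⟪rankVec σ, ζ⟫ = (a σ * ζ.re + b σ * (√3 * ζ.im)) / √2 := by
      simp only [rankVec, Complex.inner, Complex.mul_re, Complex.conj_re, Complex.conj_im, ha, hb]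
      push_cast
      ring
    rw [hlin, div_pow, Real.sq_sqrt zero_le_two]
    linear_combination (b σ * ζ.im) ^ 2 / 2 * Real.sq_sqrt (zero_le_three (α := ℝ))
  simp_rw [hinner, Finset.sum_add_distrib, ← Finset.mul_sum]
  rw [haa, hab, hbb, ← Complex.normSq_eq_norm_sq, Complex.normSq_apply]
  ring

lemma isBoundedIsotropic_rankLaw : IsBoundedIsotropic rankLaw 2 where
  isNegInvariant := by
    have hneg : (Neg.neg : ℂ → ℂ) ∘ rankVec = rankVec ∘ Equiv.mulLeft Fin.revPerm :=
      funext fun σ ↦ (rankVec_revPerm_mul σ).symm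
    refine ⟨?_⟩
    rw [Measure.neg, rankLaw, Measure.map_map measurable_neg (measurable_of_finite _), hneg,
      ← Measure.map_map (measurable_of_finite _) (measurable_of_finite _),
      map_equiv_toMeasure_uniformOfFintype]
  norm_sq_le := by
    rw [rankLaw, ae_map_iff (measurable_of_finite _).aemeasurable (by measurability)]
    exact ae_of_all _ fun σ ↦ (norm_rankVec_sq σ).le
  integral_inner_sq ζ := by
    rw [integral_rankLaw (by fun_prop), sum_inner_rankVec_sq,
      mul_div_cancel_left₀ _ (by norm_num)]

lemma map_friedmanMeasure_three (n : ℕ) :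
    (friedmanMeasure n 3).map (fun ω ↦ (√n)⁻¹ • ∑ i, rankVec (ω i))
      = normalizedSumLaw rankLaw n := by
  rw [normalizedSumLaw, rankLaw, friedmanMeasure, toMeasure_uniformOfFintype_pi_eq,
    ← Measure.pi_map_pi fun _ ↦ (measurable_of_finite rankVec).aemeasurable,
    Measure.map_map (by fun_prop) (measurable_of_finite _)]
  rfl

lemma friedmanMeasure_three_real_le {z : ℝ} (hz : 0 ≤ z) (n : ℕ) :
    (friedmanMeasure n 3).real {ω | friedman n 3 ω ≤ z}
      = (normalizedSumLaw rankLaw n).real (closedBall 0 √z) := by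
  rw [← map_friedmanMeasure_three,
    map_measureReal_apply (measurable_of_finite _) measurableSet_closedBall]
  congr 1
  ext ω
  rw [Set.mem_ofPred_eq, friedman_three_eq_norm_sq, Set.mem_preimage, mem_closedBall_zero_iff,
    Real.le_sqrt (norm_nonneg _) hz]

end Friedman

/-- **Corollary 1.3, case `r = 3` (Gaunt–Reinert).** For `n ≥ 1` and all `z ≥ 0`,
`|P(F_3 ≤ z) − P(Y_2 ≤ z)| ≤ 29/n^{1/4} + 67/n^{1/2} + 62/n^{3/4} + 8/n^{5/4} + 38/n^{3/2}`. -/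
theorem friedman_three_kolmogorov_bound (n : ℕ) (hn : 1 ≤ n) (z : ℝ) (hz : 0 ≤ z) :
    |((friedmanMeasure n 3) {ω | friedman n 3 ω ≤ z}).toReal
        - ((chiSq 2) (Set.Iic z)).toReal|
      ≤ 29 / (n : ℝ) ^ ((1 : ℝ) / 4) + 67 / (n : ℝ) ^ ((1 : ℝ) / 2)
        + 62 / (n : ℝ) ^ ((3 : ℝ) / 4) + 8 / (n : ℝ) ^ ((5 : ℝ) / 4)
        + 38 / (n : ℝ) ^ ((3 : ℝ) / 2) := by
  have hrate := abs_normalizedSumLaw_real_closedBall_sub_le Complex.finrank_real_complex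
    isBoundedIsotropic_rankLaw hn (Real.sqrt_nonneg z)
  rw [Real.sq_sqrt hz, ← friedmanMeasure_three_real_le hz, ← chiSq_two_real_Iic hz] at hrate
  calc _ ≤ 12 * 2 / (n : ℝ) ^ ((1 : ℝ) / 4) := hrate
    _ ≤ 29 / (n : ℝ) ^ ((1 : ℝ) / 4) := by
        gcongr
        norm_num
    _ ≤ _ := by
        simp only [add_assoc]
        exact le_add_of_nonneg_right (by positivity)
end
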